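/- arXiv:2101.02428 — 2 statements merged into one kernel-verified Lean document; each statement's English description precedes it below -/
import Mathlib

section
/- Assume hypothesis (H) holds and let h0 ∈ L^{ψ,1}(Ω, K). If there exists α ∈ [0, 1/2) such that |g_n(x)| ≤ α · min{|J_{f_n}(x)|/(K·L), 1/N} for all n ∈ {1,…,N} and almost all x ∈ Ω, then the series Σ_{n=0}^{∞} Pⁿh0 converges in L^{ψ,1}(Ω, K) to the unique solution φ ∈ L^{ψ,1}(Ω, K) of the equation φ = Pφ + h0, and for every m ∈ ℕ one has ‖Σ_{n=m}^{∞} Pⁿh0‖_{L^{ψ,1}(Ω,K)} ≤ (2α)^m (1 − 2α)^{-1} ‖h0‖_{L^{ψ,1}(Ω,K)}. -/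
open MeasureTheory Filter Topology Set
open scoped ENNReal

/-- A (finite-valued) Young function: non-decreasing, left-continuous and convex on
`[0, ∞)`, with `ψ 0 = 0 = lim_{t→0+} ψ t` and `lim_{t→∞} ψ t = ∞`. -/
def IsYoung (ψ : ℝ → ℝ) : Prop :=
  MonotoneOn ψ (Set.Ici 0) ∧
  ConvexOn ℝ (Set.Ici 0) ψ ∧
  (∀ t : ℝ, 0 < t → Tendsto ψ (𝓝[<] t) (𝓝 (ψ t))) ∧
  ψ 0 = 0 ∧ Tendsto ψ (𝓝[>] 0) (𝓝 0) ∧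
  Tendsto ψ atTop atTop

/-- The Young function `ψ` satisfies condition `Δ₂` globally. -/
def Delta2 (ψ : ℝ → ℝ) : Prop :=
  ∃ d : ℝ, 1 < d ∧ ∀ t : ℝ, 0 < t → ψ (2 * t) ≤ d * ψ t

/-- `x0` is a density point of the set `S` (w.r.t. `k`-dimensional Lebesgue measure). -/
def IsDensityPt {k : ℕ} (S : Set (EuclideanSpace ℝ (Fin k)))
    (x0 : EuclideanSpace ℝ (Fin k)) : Prop :=
  Tendsto (fun r : ℝ =>
      volume (S ∩ Metric.closedBall x0 r) / volume (Metric.closedBall x0 r))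
    (𝓝[>] 0) (𝓝 1)

/-- The linear map `L` is an approximate differential of `F` at `x0 ∈ Ω`. -/
def HasApproxDerivAt {k : ℕ} (Ω : Set (EuclideanSpace ℝ (Fin k)))
    (F : EuclideanSpace ℝ (Fin k) → EuclideanSpace ℝ (Fin k))
    (L : EuclideanSpace ℝ (Fin k) →L[ℝ] EuclideanSpace ℝ (Fin k))
    (x0 : EuclideanSpace ℝ (Fin k)) : Prop :=
  ∀ ε : ℝ, 0 < ε →
    IsDensityPt {x | x ∈ Ω \ {x0} ∧ ‖F x - F x0 - L (x - x0)‖ / ‖x - x0‖ < ε} x0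

/-- The distribution function `μ_f(s) = μ {x ∈ Ω : |f x| > s}` of `f : Ω → 𝕜`. -/
noncomputable def distribFn {k : ℕ} {𝕜 : Type*} [RCLike 𝕜]
    (Ω : Set (EuclideanSpace ℝ (Fin k))) (f : EuclideanSpace ℝ (Fin k) → 𝕜)
    (s : ℝ) : ℝ≥0∞ :=
  volume {x | x ∈ Ω ∧ s < ‖f x‖}

/-- The `[0, ∞]`-valued extension of `σ = τ⁻¹ : [0, ∞) → [0, ∞)`. -/
noncomputable def extInv (σ : ℝ → ℝ) : ℝ≥0∞ → ℝ≥0∞ :=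
  fun a => if a = ∞ then ∞ else ENNReal.ofReal (σ a.toReal)

/-- The Lorentz norm `‖f‖_{L^{ψ,1}(Ω,𝕜)} = ∫₀^∞ τ⁻¹(μ_f(s)) ds`, where `σ = τ⁻¹`. -/
noncomputable def lorentzNorm {k : ℕ} {𝕜 : Type*} [RCLike 𝕜]
    (Ω : Set (EuclideanSpace ℝ (Fin k))) (σ : ℝ → ℝ)
    (f : EuclideanSpace ℝ (Fin k) → 𝕜) : ℝ≥0∞ :=
  ∫⁻ s in Set.Ioi (0 : ℝ), extInv σ (distribFn Ω f s)

/-- Membership in the Lorentz space `L^{ψ,1}(Ω,𝕜)`. -/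
def MemLorentz {k : ℕ} {𝕜 : Type*} [RCLike 𝕜]
    (Ω : Set (EuclideanSpace ℝ (Fin k))) (σ : ℝ → ℝ)
    (f : EuclideanSpace ℝ (Fin k) → 𝕜) : Prop :=
  Measurable f ∧ LocallyIntegrableOn f Ω volume ∧ lorentzNorm Ω σ f < ∞

/-- The linear operator `P φ = ∑ n, g n · (φ ∘ f n)`. -/
noncomputable def Pop {k N : ℕ} {𝕜 : Type*} [RCLike 𝕜]
    (f : Fin N → EuclideanSpace ℝ (Fin k) → EuclideanSpace ℝ (Fin k))
    (g : Fin N → EuclideanSpace ℝ (Fin k) → 𝕜)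
    (φ : EuclideanSpace ℝ (Fin k) → 𝕜) : EuclideanSpace ℝ (Fin k) → 𝕜 :=
  fun x => ∑ n : Fin N, g n x * φ (f n x)

/-- An increasing homeomorphism-like gauge `E` of `[0, ∞]` for which `E a / a` is
non-increasing. -/
structure QuasiconcaveGauge (E : ℝ≥0∞ → ℝ≥0∞) : Prop where
  monotone : Monotone E
  continuous : Continuous E
  map_zero : E 0 = 0
  map_ne_zero : ∀ a, a ≠ 0 → E a ≠ 0
  map_ne_top : ∀ a, a ≠ ∞ → E a ≠ ∞
  map_top : E ∞ = ∞
  mul_le_mul : ∀ a b, a ≤ b → a * E b ≤ b * E a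

namespace QuasiconcaveGauge

variable {E : ℝ≥0∞ → ℝ≥0∞}

lemma le_mul_div (hE : QuasiconcaveGauge E) {a b : ℝ≥0∞} (hab : a ≤ b) (ha : a ≠ 0)
    (ha' : a ≠ ∞) : E b ≤ b * (E a / a) := by
  rw [← mul_div_assoc, ENNReal.le_div_iff_mul_le (Or.inl ha) (Or.inl ha'), mul_comm]
  exact hE.mul_le_mul a b hab

lemma div_le_div (hE : QuasiconcaveGauge E) {a b : ℝ≥0∞} (hab : a ≤ b) (ha : a ≠ 0)
    (ha' : a ≠ ∞) : E b / b ≤ E a / a := by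
  refine ENNReal.div_le_of_le_mul ?_
  rw [mul_comm]
  exact hE.le_mul_div hab ha ha'

lemma map_add_le (hE : QuasiconcaveGauge E) (m d : ℝ≥0∞) {u : ℝ≥0∞} (hu : u ≠ 0)
    (hu' : u ≠ ∞) :
    E (m + d) + E (min m u) ≤ E m + E (min (m + d) u) + d * (E u / u) := by
  rcases le_total (m + d) u with h | h
  · rw [min_eq_left h, min_eq_left (le_self_add.trans h), add_comm (E m)]
    exact le_self_add
  · rw [min_eq_right h]
    rcases le_total m u with h' | h'
    · rw [min_eq_left h', add_comm, add_assoc]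
      gcongr
      calc E (m + d) ≤ (m + d) * (E u / u) := hE.le_mul_div h hu hu'
        _ = m * (E u / u) + d * (E u / u) := add_mul _ _ _
        _ ≤ u * (E u / u) + d * (E u / u) := by gcongr
        _ = E u + d * (E u / u) := by rw [ENNReal.mul_div_cancel hu hu']
    · rw [min_eq_right h', add_right_comm]
      gcongr
      by_cases hm : m = ∞
      · simp [hm, hE.map_top]
      · have hm0 : m ≠ 0 := (hu.bot_lt.trans_le h').ne'
        calc E (m + d) ≤ (m + d) * (E m / m) := hE.le_mul_div le_self_add hm0 hm
          _ = E m + d * (E m / m) := by rw [add_mul, ENNReal.mul_div_cancel hm0 hm]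
          _ ≤ E m + d * (E u / u) := by
            gcongr E m + d * ?_
            exact hE.div_le_div h' hu hu'

end QuasiconcaveGauge

section LorentzFunctional

variable {X : Type*} [MeasurableSpace X] {μ : Measure X} {E : ℝ≥0∞ → ℝ≥0∞}

/-- The functional `∫₀^∞ E (μ {F > s}) ds` on `[0, ∞]`-valued functions. -/
noncomputable def lorentzGauge (μ : Measure X) (E : ℝ≥0∞ → ℝ≥0∞) (F : X → ℝ≥0∞) : ℝ≥0∞ :=
  ∫⁻ s in Ioi (0 : ℝ), E (μ {x | ENNReal.ofReal s < F x})

lemma antitone_measure_superlevel (μ : Measure X) (F : X → ℝ≥0∞) :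
    Antitone fun s : ℝ => μ {x | ENNReal.ofReal s < F x} := fun _ _ hst =>
  measure_mono fun _ hx => (ENNReal.ofReal_le_ofReal hst).trans_lt hx

lemma measurable_gauge_superlevel (hE : QuasiconcaveGauge E) (μ : Measure X) (F : X → ℝ≥0∞) :
    Measurable fun s : ℝ => E (μ {x | ENNReal.ofReal s < F x}) :=
  (hE.monotone.comp_antitone (antitone_measure_superlevel μ F)).measurable

lemma lorentzGauge_mono_ae (hE : QuasiconcaveGauge E) {F G : X → ℝ≥0∞}
    (h : ∀ᵐ x ∂μ, F x ≤ G x) : lorentzGauge μ E F ≤ lorentzGauge μ E G := by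
  refine lintegral_mono fun s => hE.monotone (measure_mono_ae ?_)
  filter_upwards [h] with x hx hs using lt_of_lt_of_le hs hx

lemma lorentzGauge_zero (hE : QuasiconcaveGauge E) :
    lorentzGauge μ E (fun _ => 0) = 0 := by
  simp [lorentzGauge, hE.map_zero]

lemma measure_superlevel_le_liminf (μ : Measure X) {F : ℕ → X → ℝ≥0∞} {G : X → ℝ≥0∞}
    (hF : ∀ j, Measurable (F j)) (hG : Measurable G)
    (h : ∀ x, Tendsto (fun j => F j x) atTop (𝓝 (G x))) (a : ℝ≥0∞) :
    μ {x | a < G x} ≤ liminf (fun j => μ {x | a < F j x}) atTop := by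
  have key : ∀ x, ({x | a < G x}.indicator 1 x : ℝ≥0∞) ≤
      liminf (fun j => ({x | a < F j x}.indicator 1 x : ℝ≥0∞)) atTop := by
    intro x
    by_cases hx : a < G x
    · refine le_liminf_of_le (by isBoundedDefault) ?_
      filter_upwards [(h x).eventually_const_lt hx] with j hj
      simp [hx, hj]
    · simp [hx]
  calc μ {x | a < G x} = ∫⁻ x, {x | a < G x}.indicator 1 x ∂μ :=
        (lintegral_indicator_one (measurableSet_lt measurable_const hG)).symm
    _ ≤ ∫⁻ x, liminf (fun j => ({x | a < F j x}.indicator 1 x : ℝ≥0∞)) atTop ∂μ :=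
        lintegral_mono key
    _ ≤ liminf (fun j => ∫⁻ x, ({x | a < F j x}.indicator 1 x : ℝ≥0∞) ∂μ) atTop :=
        lintegral_liminf_le fun j =>
          measurable_one.indicator (measurableSet_lt measurable_const (hF j))
    _ = _ := by
        congr with j
        exact lintegral_indicator_one (measurableSet_lt measurable_const (hF j))

lemma lorentzGauge_le_of_tendsto (hE : QuasiconcaveGauge E) {F : ℕ → X → ℝ≥0∞}
    {G : X → ℝ≥0∞} (hF : ∀ j, Measurable (F j)) (hG : Measurable G)
    (h : ∀ x, Tendsto (fun j => F j x) atTop (𝓝 (G x))) {C : ℝ≥0∞}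
    (hC : ∀ j, lorentzGauge μ E (F j) ≤ C) : lorentzGauge μ E G ≤ C := by
  calc lorentzGauge μ E G
      ≤ ∫⁻ s in Ioi (0 : ℝ),
          liminf (fun j => E (μ {x | ENNReal.ofReal s < F j x})) atTop := by
        refine lintegral_mono fun s => ?_
        refine (hE.monotone (measure_superlevel_le_liminf μ hF hG h _)).trans_eq ?_
        exact hE.monotone.map_liminf_of_continuousAt _ hE.continuous.continuousAt
    _ ≤ liminf (fun j => lorentzGauge μ E (F j)) atTop :=
        lintegral_liminf_le fun j => measurable_gauge_superlevel hE μ (F j)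
    _ ≤ C := liminf_le_of_le (by isBoundedDefault) fun b hb => by
        obtain ⟨j, hj⟩ := hb.exists
        exact hj.trans (hC j)

lemma lintegral_measure_layer_le [SFinite μ] {F V : X → ℝ≥0∞} (hF : Measurable F)
    (hV : Measurable V) :
    ∫⁻ s in Ioi (0 : ℝ), μ {x | F x ≤ ENNReal.ofReal s ∧ ENNReal.ofReal s < F x + V x} ≤
      ∫⁻ x, V x ∂μ := by
  have hm : MeasurableSet {p : ℝ × X |
      F p.2 ≤ ENNReal.ofReal p.1 ∧ ENNReal.ofReal p.1 < F p.2 + V p.2} := by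
    have h1 : MeasurableSet {p : ℝ × X | F p.2 ≤ ENNReal.ofReal p.1} :=
      measurableSet_le (by fun_prop) (by fun_prop)
    have h2 : MeasurableSet {p : ℝ × X | ENNReal.ofReal p.1 < F p.2 + V p.2} :=
      measurableSet_lt (by fun_prop) (by fun_prop)
    exact h1.inter h2
  calc ∫⁻ s in Ioi (0 : ℝ), μ {x | F x ≤ ENNReal.ofReal s ∧ ENNReal.ofReal s < F x + V x}
      = ((volume.restrict (Ioi (0 : ℝ))).prod μ) {p : ℝ × X |
          F p.2 ≤ ENNReal.ofReal p.1 ∧ ENNReal.ofReal p.1 < F p.2 + V p.2} :=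
        (Measure.prod_apply hm).symm
    _ = ∫⁻ x, (volume.restrict (Ioi (0 : ℝ)))
          {s | F x ≤ ENNReal.ofReal s ∧ ENNReal.ofReal s < F x + V x} ∂μ :=
        Measure.prod_apply_symm hm
    _ ≤ ∫⁻ x, V x ∂μ := by
        refine lintegral_mono fun x => ?_
        by_cases hFx : F x = ∞
        · simp [hFx]
        by_cases hVx : V x = ∞
        · simp [hVx]
        rw [Measure.restrict_apply' measurableSet_Ioi]
        calc _ ≤ volume (Ico (F x).toReal (F x + V x).toReal) := by
              refine measure_mono fun s hs => ?_
              obtain ⟨⟨h1, h2⟩, h3⟩ := hs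
              have h3 : 0 < s := h3
              exact ⟨ENNReal.toReal_le_of_le_ofReal h3.le h1,
                (ENNReal.ofReal_lt_iff_lt_toReal h3.le (by simp [hFx, hVx])).1 h2⟩
          _ = V x := by
              rw [Real.volume_Ico, ENNReal.toReal_add hFx hVx, add_sub_cancel_left,
                ENNReal.ofReal_toReal hVx]

lemma lorentzGauge_add_le_of_bounded [SFinite μ] (hE : QuasiconcaveGauge E)
    {F V : X → ℝ≥0∞} (hF : Measurable F) (hV : Measurable V) {b : ℝ} (hb : 0 ≤ b)
    {u : ℝ≥0∞} (hVb : ∀ᵐ x ∂μ, V x ≤ ENNReal.ofReal b)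
    (hVu : ∫⁻ x, V x ∂μ ≤ ENNReal.ofReal b * u) :
    lorentzGauge μ E (fun x => F x + V x) ≤
      lorentzGauge μ E F + 2 * ENNReal.ofReal b * E u := by
  by_cases hV0 : ∫⁻ x, V x ∂μ = 0
  · refine (lorentzGauge_mono_ae hE ?_).trans le_self_add
    filter_upwards [(lintegral_eq_zero_iff hV).1 hV0] with x hx
    simp [hx]
  have hbu : ENNReal.ofReal b * u ≠ 0 := fun h => hV0 (le_antisymm (hVu.trans h.le) bot_le)
  have hu : u ≠ 0 := right_ne_zero_of_mul hbu
  have hb0 : ENNReal.ofReal b ≠ 0 := left_ne_zero_of_mul hbu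
  by_cases hu' : u = ∞
  · rw [hu', hE.map_top, ENNReal.mul_top (mul_ne_zero two_ne_zero hb0), add_top]
    exact le_top
  by_cases hFtop : lorentzGauge μ E F = ∞
  · simp [hFtop]
  set m : ℝ → ℝ≥0∞ := fun s => μ {x | ENNReal.ofReal s < F x} with hm
  set d : ℝ → ℝ≥0∞ :=
    fun s => μ {x | F x ≤ ENNReal.ofReal s ∧ ENNReal.ofReal s < F x + V x} with hd
  have hmd : ∀ s, μ {x | ENNReal.ofReal s < F x + V x} = m s + d s := by
    intro s
    rw [hm, hd, ← measure_union' _ (measurableSet_lt measurable_const hF)]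
    · congr 1
      ext x
      simp only [mem_ofPred_eq, mem_union]
      constructor
      · intro h
        rcases lt_or_ge (ENNReal.ofReal s) (F x) with h' | h'
        · exact Or.inl h'
        · exact Or.inr ⟨h', h⟩
      · rintro (h | h)
        · exact h.trans_le le_self_add
        · exact h.2
    · exact disjoint_left.2 fun x hx hx' => not_le_of_gt hx hx'.1
  have hmono : Antitone fun s => E (min (m s) u) := fun s t hst =>
    hE.monotone (min_le_min_right _ (antitone_measure_superlevel μ F hst))
  have hshift : ∀ s, b < s → m s + d s ≤ m (s - b) := by
    intro s hs
    rw [← hmd]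
    refine measure_mono_ae ?_
    filter_upwards [hVb] with x hx (h : ENNReal.ofReal s < F x + V x)
    change ENNReal.ofReal (s - b) < F x
    by_contra! hc
    have : F x + V x ≤ ENNReal.ofReal s := by
      refine (add_le_add hc hx).trans_eq ?_
      rw [← ENNReal.ofReal_add (by linarith) hb, sub_add_cancel]
    exact absurd h (not_lt.2 this)
  set I : ℝ≥0∞ := ∫⁻ s in Ioi (0 : ℝ), E (min (m s) u) with hI
  have hItop : I ≠ ∞ := by
    refine ne_top_of_le_ne_top hFtop (lintegral_mono fun s => hE.monotone (min_le_left _ _))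
  have hIshift : ∫⁻ s in Ioi (0 : ℝ), E (min (m s + d s) u) ≤ ENNReal.ofReal b * E u + I := by
    rw [← Ioc_union_Ioi_eq_Ioi hb, lintegral_union measurableSet_Ioi
      (disjoint_left.2 fun x hx hx' => not_lt_of_ge hx.2 hx')]
    gcongr
    · calc ∫⁻ s in Ioc 0 b, E (min (m s + d s) u) ≤ ∫⁻ _ in Ioc 0 b, E u :=
            lintegral_mono fun s => hE.monotone (min_le_right _ _)
        _ = ENNReal.ofReal b * E u := by simp [mul_comm]
    · calc ∫⁻ s in Ioi b, E (min (m s + d s) u)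
          ≤ ∫⁻ s in Ioi b, E (min (m (s - b)) u) :=
            setLIntegral_mono' measurableSet_Ioi fun s hs =>
              hE.monotone (min_le_min_right _ (hshift s hs))
        _ = I := by
            rw [hI, ← lintegral_indicator measurableSet_Ioi,
              ← lintegral_indicator measurableSet_Ioi,
              ← lintegral_sub_right_eq_self ((Ioi (0 : ℝ)).indicator _) b]
            congr with s
            simp [indicator, sub_pos]
  have hdint : ∫⁻ s in Ioi (0 : ℝ), d s * (E u / u) ≤ ENNReal.ofReal b * E u := by
    rw [lintegral_mul_const' _ _ (ENNReal.div_ne_top (hE.map_ne_top u hu') hu)]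
    calc _ ≤ ENNReal.ofReal b * u * (E u / u) := by
          gcongr
          exact (lintegral_measure_layer_le hF hV).trans hVu
      _ = ENNReal.ofReal b * E u := by rw [mul_assoc, ENNReal.mul_div_cancel hu hu']
  have hmeas1 : Measurable fun s => E (min (m s) u) := hmono.measurable
  have hmeas2 : Measurable fun s => E (m s) := measurable_gauge_superlevel hE μ F
  have hmeas3 : Measurable fun s => E (min (m s + d s) u) := by
    simp_rw [← hmd]
    exact Antitone.measurable fun s t hst => hE.monotone
      (min_le_min_right _ (antitone_measure_superlevel μ (fun x => F x + V x) hst))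
  refine (ENNReal.add_le_add_iff_right hItop).1 ?_
  calc lorentzGauge μ E (fun x => F x + V x) + I
      = ∫⁻ s in Ioi (0 : ℝ), (E (m s + d s) + E (min (m s) u)) := by
        rw [lintegral_add_right _ hmeas1, lorentzGauge]
        simp_rw [hmd, hI]
    _ ≤ ∫⁻ s in Ioi (0 : ℝ), (E (m s) + E (min (m s + d s) u) + d s * (E u / u)) :=
        lintegral_mono fun s => hE.map_add_le _ _ hu hu'
    _ = lorentzGauge μ E F + (∫⁻ s in Ioi (0 : ℝ), E (min (m s + d s) u)) +
          ∫⁻ s in Ioi (0 : ℝ), d s * (E u / u) := by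
        rw [lintegral_add_left (by exact hmeas2.add hmeas3), lintegral_add_left hmeas2, lorentzGauge]
    _ ≤ lorentzGauge μ E F + (ENNReal.ofReal b * E u + I) + ENNReal.ofReal b * E u := by
        gcongr
    _ = lorentzGauge μ E F + 2 * ENNReal.ofReal b * E u + I := by ring

end LorentzFunctional

section Staircase

variable {X : Type*}

/-- The lower staircase with `n` steps of height `c` under `G`. -/
noncomputable def staircase (c : ℝ) (n : ℕ) (G : X → ℝ≥0∞) : X → ℝ≥0∞ :=
  ∑ i ∈ Finset.range n,
    {x | ENNReal.ofReal ((i + 1) * c) < G x}.indicator fun _ => ENNReal.ofReal c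

lemma staircase_eq_of_lt {c : ℝ} (hc : 0 ≤ c) {n : ℕ} {G : X → ℝ≥0∞} {x : X}
    (h : ENNReal.ofReal (n * c) < G x) : staircase c n G x = ENNReal.ofReal (n * c) := by
  have : ∀ i ∈ Finset.range n, ({x | ENNReal.ofReal ((i + 1) * c) < G x}.indicator
      (fun _ => ENNReal.ofReal c)) x = ENNReal.ofReal c := by
    intro i hi
    refine indicator_of_mem ?_ _
    refine lt_of_le_of_lt (ENNReal.ofReal_le_ofReal ?_) h
    gcongr
    exact_mod_cast Finset.mem_range.1 hi
  rw [staircase, Finset.sum_apply, Finset.sum_congr rfl this, Finset.sum_const,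
    Finset.card_range, nsmul_eq_mul, ENNReal.ofReal_mul (by positivity), ENNReal.ofReal_natCast]

lemma staircase_succ (c : ℝ) (n : ℕ) (G : X → ℝ≥0∞) :
    staircase c (n + 1) G = staircase c n G +
      {x | ENNReal.ofReal ((n + 1) * c) < G x}.indicator fun _ => ENNReal.ofReal c :=
  Finset.sum_range_succ _ n

lemma staircase_le {c : ℝ} (hc : 0 ≤ c) (n : ℕ) (G : X → ℝ≥0∞) (x : X) :
    staircase c n G x ≤ G x := by
  induction n with
  | zero => simp [staircase]
  | succ n ih =>
    by_cases h : ENNReal.ofReal ((n + 1) * c) < G x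
    · rw [staircase_eq_of_lt hc (by exact_mod_cast h)]
      exact_mod_cast h.le
    · rw [staircase_succ]
      simpa [h] using ih

lemma min_le_staircase_add {c : ℝ} (hc : 0 ≤ c) (n : ℕ) (G : X → ℝ≥0∞) (x : X) :
    min (G x) (ENNReal.ofReal (n * c)) ≤ staircase c n G x + ENNReal.ofReal c := by
  induction n with
  | zero => simp
  | succ n ih =>
    have hle : staircase c n G x ≤ staircase c (n + 1) G x := by
      rw [staircase_succ]
      exact le_self_add
    rcases le_or_gt (G x) (ENNReal.ofReal (n * c)) with h | h
    · rw [min_eq_left h] at ih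
      exact (min_le_left _ _).trans (ih.trans (by gcongr))
    · refine (min_le_right _ _).trans ?_
      calc ENNReal.ofReal ((n + 1 : ℕ) * c) = staircase c n G x + ENNReal.ofReal c := by
            rw [staircase_eq_of_lt hc h, ← ENNReal.ofReal_add (by positivity) hc]
            congr 1
            push_cast
            ring
        _ ≤ _ := by gcongr

lemma tendsto_staircase (G : X → ℝ≥0∞) (x : X) :
    Tendsto (fun j : ℕ => staircase (1 / ((j : ℝ) + 1)) ((j + 1) * (j + 1)) G x) atTop
      (𝓝 (G x)) := by
  have hc : ∀ j : ℕ, (0 : ℝ) ≤ 1 / ((j : ℝ) + 1) := fun j => by positivity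
  have h1 : Tendsto (fun j : ℕ => ENNReal.ofReal (((j + 1) * (j + 1) : ℕ) * (1 / ((j : ℝ) + 1))))
      atTop (𝓝 ∞) := by
    have : ∀ j : ℕ, (((j + 1) * (j + 1) : ℕ) * (1 / ((j : ℝ) + 1))) = (j : ℝ) + 1 := by
      intro j
      push_cast
      field_simp
    simp_rw [this]
    exact ENNReal.tendsto_ofReal_atTop.comp
      (tendsto_atTop_add_const_right _ _ tendsto_natCast_atTop_atTop)
  have h2 : Tendsto (fun j : ℕ => ENNReal.ofReal (1 / ((j : ℝ) + 1))) atTop (𝓝 0) := by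
    simpa using ENNReal.tendsto_ofReal tendsto_one_div_add_atTop_nhds_zero_nat
  have h3 := ENNReal.Tendsto.sub ((tendsto_const_nhds (x := G x)).min h1) h2
    (Or.inr ENNReal.zero_ne_top)
  rw [min_eq_left le_top, tsub_zero] at h3
  exact tendsto_of_tendsto_of_tendsto_of_le_of_le h3 tendsto_const_nhds
    (fun j => tsub_le_iff_right.2 (min_le_staircase_add (hc j) _ G x))
    (fun j => staircase_le (hc j) _ G x)

end Staircase

section LorentzContraction

variable {X : Type*} [MeasurableSpace X] {μ : Measure X} {E : ℝ≥0∞ → ℝ≥0∞}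

/-- A positive additive operator on `[0, ∞]`-valued functions that has norm at most `b` on both
`L¹` and `L^∞`, and is continuous along pointwise convergent sequences. -/
structure PositiveContraction (μ : Measure X) (T : (X → ℝ≥0∞) → X → ℝ≥0∞) (b : ℝ) : Prop where
  nonneg : 0 ≤ b
  measurable : ∀ G, Measurable G → Measurable (T G)
  map_zero : T 0 = 0
  map_add : ∀ G H, T (G + H) = T G + T H
  tendsto : ∀ (G : ℕ → X → ℝ≥0∞) (H : X → ℝ≥0∞),
    (∀ x, Tendsto (fun j => G j x) atTop (𝓝 (H x))) →
      ∀ x, Tendsto (fun j => T (G j) x) atTop (𝓝 (T H x))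
  ae_le : ∀ G, Measurable G → ∀ c, (∀ᵐ x ∂μ, G x ≤ c) → ∀ᵐ x ∂μ, T G x ≤ ENNReal.ofReal b * c
  lintegral_le : ∀ G, Measurable G → ∫⁻ x, T G x ∂μ ≤ ENNReal.ofReal b * ∫⁻ x, G x ∂μ

lemma PositiveContraction.iterate {T : (X → ℝ≥0∞) → X → ℝ≥0∞} {b : ℝ}
    (hT : PositiveContraction μ T b) (n : ℕ) : PositiveContraction μ T^[n] (b ^ n) := by
  induction n with
  | zero =>
    exact ⟨by simp, fun _ h => h, rfl, fun _ _ => rfl, fun _ _ h => h,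
      fun _ _ _ h => by simpa using h, fun _ _ => by simp⟩
  | succ n ih =>
    have hb : ENNReal.ofReal (b ^ (n + 1)) = ENNReal.ofReal b * ENNReal.ofReal (b ^ n) := by
      rw [← ENNReal.ofReal_mul hT.nonneg, pow_succ']
    refine ⟨pow_nonneg hT.nonneg _, fun G hG => ?_, ?_, fun G H => ?_, fun G H h => ?_,
      fun G hG c hc => ?_, fun G hG => ?_⟩ <;> simp only [Function.iterate_succ_apply', hb, mul_assoc]
    · exact hT.measurable _ (ih.measurable G hG)
    · rw [ih.map_zero, hT.map_zero]
    · rw [ih.map_add, hT.map_add]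
    · exact hT.tendsto _ _ (ih.tendsto G H h)
    · exact hT.ae_le _ (ih.measurable G hG) _ (ih.ae_le G hG c hc)
    · exact (hT.lintegral_le _ (ih.measurable G hG)).trans
        (mul_le_mul_right (ih.lintegral_le G hG) _)

lemma measurable_step {G : X → ℝ≥0∞} (hG : Measurable G) (a : ℝ≥0∞) (c : ℝ) :
    Measurable ({x | a < G x}.indicator fun _ => ENNReal.ofReal c) :=
  measurable_const.indicator (measurableSet_lt measurable_const hG)

lemma measurable_staircase {G : X → ℝ≥0∞} (hG : Measurable G) (c : ℝ) (n : ℕ) :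
    Measurable (staircase c n G) :=
  Finset.sum_induction _ Measurable (fun _ _ => Measurable.add) measurable_zero fun _ _ =>
    measurable_step hG _ c

lemma sum_gauge_layers_le (hE : QuasiconcaveGauge E) {c : ℝ} (hc : 0 ≤ c) (n : ℕ)
    (G : X → ℝ≥0∞) :
    ∑ i ∈ Finset.range n,
      ENNReal.ofReal c * E (μ {x | ENNReal.ofReal ((i + 1) * c) < G x}) ≤
      lorentzGauge μ E G := by
  have key : ∀ n : ℕ, ∑ i ∈ Finset.range n,
      ENNReal.ofReal c * E (μ {x | ENNReal.ofReal ((i + 1) * c) < G x}) ≤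
      ∫⁻ s in Ioc (0 : ℝ) (n * c), E (μ {x | ENNReal.ofReal s < G x}) := by
    intro n
    induction n with
    | zero => simp
    | succ n ih =>
      have hn : (n : ℝ) * c ≤ (n + 1 : ℕ) * c := by
        gcongr
        simp
      rw [← Ioc_union_Ioc_eq_Ioc (by positivity : 0 ≤ (n : ℝ) * c) hn,
        lintegral_union measurableSet_Ioc
          (disjoint_left.2 fun x hx hx' => not_lt_of_ge hx.2 hx'.1), Finset.sum_range_succ]
      gcongr
      calc ENNReal.ofReal c * E (μ {x | ENNReal.ofReal ((n + 1) * c) < G x})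
          = ∫⁻ _ in Ioc ((n : ℝ) * c) ((n + 1 : ℕ) * c),
              E (μ {x | ENNReal.ofReal ((n + 1) * c) < G x}) := by
            rw [setLIntegral_const, Real.volume_Ioc, mul_comm]
            congr 2
            push_cast
            ring
        _ ≤ _ := by
            refine setLIntegral_mono' measurableSet_Ioc fun s hs => hE.monotone ?_
            exact antitone_measure_superlevel μ G (by exact_mod_cast hs.2)
  exact (key n).trans (lintegral_mono_set Ioc_subset_Ioi_self)

lemma lorentzGauge_add_staircase_le [SFinite μ] (hE : QuasiconcaveGauge E)
    {T : (X → ℝ≥0∞) → X → ℝ≥0∞} {b : ℝ} (hT : PositiveContraction μ T b)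
    {F G : X → ℝ≥0∞} (hF : Measurable F) (hG : Measurable G) {c : ℝ} (hc : 0 ≤ c) (n : ℕ) :
    lorentzGauge μ E (fun x => F x + T (staircase c n G) x) ≤ lorentzGauge μ E F +
      2 * ENNReal.ofReal b * ∑ i ∈ Finset.range n,
        ENNReal.ofReal c * E (μ {x | ENNReal.ofReal ((i + 1) * c) < G x}) := by
  induction n with
  | zero => simp [staircase, hT.map_zero]
  | succ n ih =>
    set B := {x | ENNReal.ofReal ((n + 1) * c) < G x} with hB
    have hBm : MeasurableSet B := measurableSet_lt measurable_const hG
    set V : X → ℝ≥0∞ := B.indicator fun _ => ENNReal.ofReal c with hV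
    have hVm : Measurable V := measurable_const.indicator hBm
    have hbc : ENNReal.ofReal (b * c) = ENNReal.ofReal b * ENNReal.ofReal c :=
      ENNReal.ofReal_mul hT.nonneg
    have step := lorentzGauge_add_le_of_bounded (μ := μ) hE
      (F := fun x => F x + T (staircase c n G) x) (V := T V)
      (hF.add (hT.measurable _ (measurable_staircase hG c n))) (hT.measurable _ hVm)
      (mul_nonneg hT.nonneg hc) (u := μ B)
      (by
        rw [hbc]
        exact hT.ae_le _ hVm _ (Eventually.of_forall fun x => indicator_le_self' (by simp) x))
      (by
        refine (hT.lintegral_le _ hVm).trans_eq ?_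
        rw [hV, lintegral_indicator_const hBm, hbc, mul_assoc])
    rw [staircase_succ, hT.map_add]
    simp only [Pi.add_apply, ← add_assoc]
    refine step.trans ?_
    calc _ ≤ (lorentzGauge μ E F + 2 * ENNReal.ofReal b * ∑ i ∈ Finset.range n,
          ENNReal.ofReal c * E (μ {x | ENNReal.ofReal ((i + 1) * c) < G x})) +
            2 * ENNReal.ofReal (b * c) * E (μ B) := by gcongr
      _ = _ := by
        rw [Finset.sum_range_succ, hbc]
        ring

lemma lorentzGauge_add_apply_le [SFinite μ] (hE : QuasiconcaveGauge E)
    {T : (X → ℝ≥0∞) → X → ℝ≥0∞} {b : ℝ} (hT : PositiveContraction μ T b)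
    {F G : X → ℝ≥0∞} (hF : Measurable F) (hG : Measurable G) :
    lorentzGauge μ E (fun x => F x + T G x) ≤
      lorentzGauge μ E F + 2 * ENNReal.ofReal b * lorentzGauge μ E G := by
  refine lorentzGauge_le_of_tendsto hE
    (F := fun (j : ℕ) x => F x + T (staircase (1 / ((j : ℝ) + 1)) ((j + 1) * (j + 1)) G) x)
    (fun j => hF.add (hT.measurable _ (measurable_staircase hG _ _)))
    (hF.add (hT.measurable _ hG))
    (fun x => tendsto_const_nhds.add (hT.tendsto _ _ (tendsto_staircase G) x)) fun j => ?_
  have hc : (0 : ℝ) ≤ 1 / ((j : ℝ) + 1) := by positivity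
  refine (lorentzGauge_add_staircase_le hE hT hF hG hc _).trans ?_
  gcongr
  exact sum_gauge_layers_le hE hc _ G

lemma lorentzGauge_add_sum_iterate_le [SFinite μ] (hE : QuasiconcaveGauge E)
    {T : (X → ℝ≥0∞) → X → ℝ≥0∞} {b : ℝ} (hT : PositiveContraction μ T b) (hb : b < 1)
    {F G : X → ℝ≥0∞} (hF : Measurable F) (hG : Measurable G) (p M : ℕ) :
    lorentzGauge μ E (fun x => F x + ∑ i ∈ Finset.range M, T^[i + p] G x) ≤
      lorentzGauge μ E F + ENNReal.ofReal (2 * b ^ p / (1 - b)) * lorentzGauge μ E G := by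
  have hb' : 0 < 1 - b := by linarith
  have key : lorentzGauge μ E (fun x => F x + ∑ i ∈ Finset.range M, T^[i + p] G x) ≤
      lorentzGauge μ E F +
        ENNReal.ofReal (∑ i ∈ Finset.range M, 2 * b ^ (i + p)) * lorentzGauge μ E G := by
    induction M with
    | zero => simp
    | succ M ih =>
      simp only [Finset.sum_range_succ, ← add_assoc]
      have hm : Measurable fun x => F x + ∑ i ∈ Finset.range M, T^[i + p] G x :=
        hF.add (Finset.measurable_fun_sum _ fun i _ => (hT.iterate (i + p)).measurable G hG)
      refine (lorentzGauge_add_apply_le hE (hT.iterate (M + p)) hm hG).trans ?_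
      have hp : ∀ i, 0 ≤ b ^ i := fun i => pow_nonneg hT.nonneg i
      rw [ENNReal.ofReal_add (Finset.sum_nonneg fun i _ => mul_nonneg zero_le_two (hp _))
        (mul_nonneg zero_le_two (hp _)), ENNReal.ofReal_mul zero_le_two, add_mul, ← add_assoc]
      simp only [ENNReal.ofReal_ofNat]
      gcongr
  refine key.trans ?_
  gcongr
  rw [le_div_iff₀ hb']
  have h1 : ∑ i ∈ Finset.range M, 2 * b ^ (i + p) = 2 * b ^ p * ∑ i ∈ Finset.range M, b ^ i := by
    rw [Finset.mul_sum]
    exact Finset.sum_congr rfl fun i _ => by ring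
  rw [h1, mul_assoc, geom_sum_mul_neg]
  have := pow_nonneg hT.nonneg p
  have := pow_nonneg hT.nonneg M
  nlinarith

lemma lorentzGauge_tsum_iterate_le [SFinite μ] (hE : QuasiconcaveGauge E)
    {T : (X → ℝ≥0∞) → X → ℝ≥0∞} {b : ℝ} (hT : PositiveContraction μ T b) (hb : b < 1 / 2)
    {G : X → ℝ≥0∞} (hG : Measurable G) (m : ℕ) :
    lorentzGauge μ E (fun x => ∑' i, T^[i + m] G x) ≤
      ENNReal.ofReal ((2 * b) ^ m / (1 - 2 * b)) * lorentzGauge μ E G := by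
  have h1 : 0 < 1 - b := by linarith
  have h2 : 0 < 1 - 2 * b := by linarith
  have hb0 := hT.nonneg
  have hmeas : ∀ i, Measurable (T^[i] G) := fun i => (hT.iterate i).measurable G hG
  have hlim : ∀ C, (∀ M, lorentzGauge μ E (fun x => ∑ i ∈ Finset.range M, T^[i + m] G x) ≤ C) →
      lorentzGauge μ E (fun x => ∑' i, T^[i + m] G x) ≤ C := fun C hC =>
    lorentzGauge_le_of_tendsto hE (fun M => Finset.measurable_fun_sum _ fun i _ => hmeas (i + m))
      (Measurable.tsum fun i => hmeas (i + m))
      (fun x => ENNReal.summable.hasSum.tendsto_sum_nat) hC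
  refine hlim _ fun M => ?_
  rcases m with _ | m
  · calc lorentzGauge μ E (fun x => ∑ i ∈ Finset.range M, T^[i + 0] G x)
        ≤ lorentzGauge μ E (fun x => G x + ∑ i ∈ Finset.range M, T^[i + 1] G x) := by
          refine lorentzGauge_mono_ae hE (Eventually.of_forall fun x => ?_)
          have : G x + ∑ i ∈ Finset.range M, T^[i + 1] G x =
              ∑ i ∈ Finset.range (M + 1), T^[i] G x := by
            rw [Finset.sum_range_succ', add_comm]
            rfl
          rw [this]
          exact Finset.sum_le_sum_of_subset (Finset.range_mono M.le_succ)
      _ ≤ lorentzGauge μ E G + ENNReal.ofReal (2 * b ^ 1 / (1 - b)) * lorentzGauge μ E G :=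
          lorentzGauge_add_sum_iterate_le hE hT (by linarith) hG hG 1 M
      _ = ENNReal.ofReal (1 + 2 * b ^ 1 / (1 - b)) * lorentzGauge μ E G := by
          rw [ENNReal.ofReal_add zero_le_one (by positivity), ENNReal.ofReal_one, add_mul, one_mul]
      _ ≤ _ := by
          gcongr
          rw [pow_zero, pow_one, le_div_iff₀ h2, ← sub_nonneg]
          have : 1 - (1 + 2 * b / (1 - b)) * (1 - 2 * b) = 2 * b ^ 2 / (1 - b) := by
            field_simp
            ring
          rw [this]
          positivity
  · have h := lorentzGauge_add_sum_iterate_le (μ := μ) hE hT (by linarith) (F := fun _ => 0)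
      measurable_const hG (m + 1) M
    simp only [zero_add, lorentzGauge_zero hE] at h
    refine h.trans ?_
    gcongr ENNReal.ofReal ?_ * _
    refine div_le_div₀ (by positivity) ?_ h2 (by linarith)
    rw [mul_pow]
    gcongr
    exact le_self_pow₀ one_le_two (by simp)

lemma ae_lt_top_of_lorentzGauge_ne_top (hE : QuasiconcaveGauge E) {F : X → ℝ≥0∞}
    (h : lorentzGauge μ E F ≠ ∞) : ∀ᵐ x ∂μ, F x < ∞ := by
  have hconst : ∫⁻ _ in Ioi (0 : ℝ), E (μ {x | F x = ∞}) ≤ lorentzGauge μ E F :=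
    lintegral_mono fun s => hE.monotone (measure_mono fun x hx => by
      change F x = ∞ at hx
      simp [hx])
  rw [setLIntegral_const, Real.volume_Ioi] at hconst
  have h0 : μ {x | F x = ∞} = 0 := by
    by_contra hne
    rw [ENNReal.mul_top (hE.map_ne_zero _ hne)] at hconst
    exact h (top_le_iff.1 hconst)
  filter_upwards [measure_eq_zero_iff_ae_notMem.1 h0] with x hx
  exact lt_top_iff_ne_top.2 hx

lemma setLIntegral_lt_top_of_lorentzGauge_ne_top (hE : QuasiconcaveGauge E)
    {f : X → ℝ} (hf : Measurable f) (hf0 : ∀ x, 0 ≤ f x)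
    (h : lorentzGauge μ E (fun x => ENNReal.ofReal (f x)) ≠ ∞) {S : Set X}
    (hS : MeasurableSet S) (hS' : μ S ≠ ∞) : ∫⁻ x in S, ENNReal.ofReal (f x) ∂μ < ∞ := by
  have hsub : ∀ s : ℝ, 0 ≤ s → {x | ENNReal.ofReal s < ENNReal.ofReal (f x)} = {x | s < f x} :=
    fun s hs => by
      ext x
      exact ENNReal.ofReal_lt_ofReal_iff_of_nonneg hs
  set t := μ S + 1 with ht
  have ht0 : t ≠ 0 := by simp [ht]
  have ht' : t ≠ ∞ := by simp [ht, hS']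
  rw [lintegral_eq_lintegral_meas_lt _ (Eventually.of_forall hf0) hf.aemeasurable]
  have hle : E t * ∫⁻ s in Ioi (0 : ℝ), μ.restrict S {x | s < f x} ≤
      t * lorentzGauge μ E (fun x => ENNReal.ofReal (f x)) := by
    rw [← lintegral_const_mul' _ _ (hE.map_ne_top t ht'), lorentzGauge,
      ← lintegral_const_mul' _ _ ht']
    refine setLIntegral_mono' measurableSet_Ioi fun s hs => ?_
    rw [hsub s (le_of_lt hs), Measure.restrict_apply' hS, mul_comm]
    refine (hE.mul_le_mul _ t ((measure_mono inter_subset_right).trans le_self_add)).trans ?_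
    gcongr
    exact hE.monotone (measure_mono inter_subset_left)
  refine lt_top_iff_ne_top.2 fun htop => ?_
  rw [htop, ENNReal.mul_top (hE.map_ne_zero t ht0)] at hle
  exact ENNReal.mul_ne_top ht' h (top_le_iff.1 hle)

end LorentzContraction

lemma quasiconcaveGauge_extInv {ψ τ σ : ℝ → ℝ} (hY : IsYoung ψ)
    (hsm : StrictMonoOn ψ (Set.Ici 0)) (hτ0 : τ 0 = 0)
    (hτ : ∀ t : ℝ, 0 < t → τ t = 1 / ψ (1 / t)) (hσ_nonneg : ∀ t : ℝ, 0 ≤ t → 0 ≤ σ t)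
    (hσ_left : ∀ t : ℝ, 0 ≤ t → σ (τ t) = t) (hσ_right : ∀ t : ℝ, 0 ≤ t → τ (σ t) = t) :
    QuasiconcaveGauge (extInv σ) := by
  obtain ⟨-, hconv, -, hψ0, -, -⟩ := hY
  have hψpos : ∀ t, 0 < t → 0 < ψ t := fun t ht => by
    rw [← hψ0]
    exact hsm (mem_Ici.2 le_rfl) (mem_Ici.2 ht.le) ht
  have hτpos : ∀ t, 0 < t → 0 < τ t := fun t ht => by
    rw [hτ t ht]
    exact one_div_pos.2 (hψpos _ (one_div_pos.2 ht))
  have hτnn : ∀ t, 0 ≤ t → 0 ≤ τ t := fun t ht => by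
    rcases ht.eq_or_lt with rfl | h
    · rw [hτ0]
    · exact (hτpos t h).le
  have hτmono : ∀ s t, 0 ≤ s → s < t → τ s < τ t := fun s t hs hst => by
    rcases hs.eq_or_lt with rfl | h
    · rw [hτ0]
      exact hτpos t hst
    · have ht := h.trans hst
      rw [hτ s h, hτ t ht]
      refine one_div_lt_one_div_of_lt (hψpos _ (one_div_pos.2 ht)) ?_
      exact hsm (mem_Ici.2 (one_div_pos.2 ht).le) (mem_Ici.2 (one_div_pos.2 h).le)
        (one_div_lt_one_div_of_lt h hst)
  have hσ0 : σ 0 = 0 := by simpa [hτ0] using hσ_left 0 le_rfl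
  have hσpos : ∀ a, 0 < a → 0 < σ a := fun a ha => by
    refine (hσ_nonneg a ha.le).lt_of_ne fun h => ha.ne ?_
    rw [← hσ_right a ha.le, ← h, hτ0]
  have hσmono : ∀ a b, 0 ≤ a → a ≤ b → σ a ≤ σ b := fun a b ha hab => by
    by_contra! h
    have := hτmono _ _ (hσ_nonneg b (ha.trans hab)) h
    rw [hσ_right a ha, hσ_right b (ha.trans hab)] at this
    linarith
  have hquasi : ∀ a b, 0 < a → a ≤ b → a * σ b ≤ b * σ a := fun a b ha hab => by
    have hs := hσpos a ha
    have hst := hσmono a b ha.le hab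
    have ht := hs.trans_le hst
    set s := σ a with hsdef
    set t := σ b with htdef
    have hψs := hψpos _ (one_div_pos.2 hs)
    have hψt := hψpos _ (one_div_pos.2 ht)
    have hc := hconv.2 (mem_Ici.2 (one_div_pos.2 hs).le) (mem_Ici.2 le_rfl)
      (div_nonneg hs.le ht.le) (sub_nonneg.2 ((div_le_one ht).2 hst)) (by ring)
    have harg : (s / t) • (1 / s) + (1 - s / t) • (0 : ℝ) = 1 / t := by
      simp only [smul_eq_mul]
      field_simp
      ring
    rw [harg, hψ0, smul_zero, add_zero, smul_eq_mul, div_mul_eq_mul_div, le_div_iff₀ ht] at hc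
    rw [← hσ_right a ha.le, ← hσ_right b (ha.le.trans hab), ← hsdef, ← htdef, hτ s hs, hτ t ht,
      div_mul_eq_mul_div, div_mul_eq_mul_div, div_le_div_iff₀ hψs hψt]
    linarith
  have hfin : ∀ a, a ≠ ∞ → extInv σ a = ENNReal.ofReal (σ a.toReal) := fun a ha => by
    simp [extInv, ha]
  have htop : extInv σ ∞ = ∞ := by simp [extInv]
  have hmono : Monotone (extInv σ) := fun a b hab => by
    by_cases hb : b = ∞
    · rw [hb, htop]
      exact le_top
    have ha := ne_top_of_le_ne_top hb hab
    rw [hfin a ha, hfin b hb]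
    exact ENNReal.ofReal_le_ofReal
      (hσmono _ _ ENNReal.toReal_nonneg (ENNReal.toReal_mono hb hab))
  have hpos : ∀ a, a ≠ 0 → extInv σ a ≠ 0 := fun a ha => by
    by_cases ha' : a = ∞
    · simp [ha', htop]
    · rw [hfin a ha']
      exact (ENNReal.ofReal_pos.2 (hσpos _ (ENNReal.toReal_pos ha ha'))).ne'
  have hzero : extInv σ 0 = 0 := by simp [extInv, hσ0]
  refine ⟨hmono, hmono.continuous_of_surjective fun y => ?_, hzero, hpos,
    fun a ha => by simp [hfin a ha], htop, fun a b hab => ?_⟩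
  · by_cases hy : y = ∞
    · exact ⟨∞, by rw [htop, hy]⟩
    · refine ⟨ENNReal.ofReal (τ y.toReal), ?_⟩
      rw [hfin _ ENNReal.ofReal_ne_top,
        ENNReal.toReal_ofReal (hτnn _ ENNReal.toReal_nonneg),
        hσ_left _ ENNReal.toReal_nonneg, ENNReal.ofReal_toReal hy]
  · by_cases ha0 : a = 0
    · simp [ha0]
    by_cases hb : b = ∞
    · rw [hb, ENNReal.top_mul (hpos a ha0)]
      exact le_top
    have ha := ne_top_of_le_ne_top hb hab
    rw [hfin a ha, hfin b hb]
    have h := hquasi _ _ (ENNReal.toReal_pos ha0 ha) (ENNReal.toReal_mono hb hab)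
    have h' := ENNReal.ofReal_le_ofReal h
    rwa [ENNReal.ofReal_mul ENNReal.toReal_nonneg, ENNReal.ofReal_mul ENNReal.toReal_nonneg,
      ENNReal.ofReal_toReal ha, ENNReal.ofReal_toReal hb] at h'

section ApproxDeriv

variable {k : ℕ}

local notation "𝔼" => EuclideanSpace ℝ (Fin k)

lemma volume_closedBall_half (x y : 𝔼) {r : ℝ} (hr : 0 ≤ r) :
    volume (Metric.closedBall y (r / 2)) = (1 / 2) ^ k * volume (Metric.closedBall x r) := by
  rw [Measure.addHaar_closedBall _ _ hr, Measure.addHaar_closedBall _ _ (by positivity),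
    finrank_euclideanSpace_fin, div_pow, ENNReal.ofReal_div_of_pos (by positivity), ← mul_assoc]
  congr 1
  rw [mul_comm, one_div, ← ENNReal.inv_pow, ENNReal.ofReal_pow zero_le_two, ENNReal.ofReal_ofNat,
    div_eq_mul_inv]

lemma measurableSet_slope_le {f : 𝔼 → 𝔼} (hf : Measurable f) (x : 𝔼) (C : ℝ) :
    MeasurableSet {y | ‖f y - f x‖ ≤ C * ‖y - x‖} :=
  measurableSet_le (by fun_prop) (by fun_prop)

lemma HasApproxDerivAt.exists_slope_le {Ω : Set 𝔼} {f : 𝔼 → 𝔼} (hf : Measurable f)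
    {A : 𝔼 →L[ℝ] 𝔼} {x : 𝔼} (h : HasApproxDerivAt Ω f A x) :
    ∃ j : ℕ, ∀ r : ℝ, 0 < r → r < 1 / ((j : ℝ) + 1) →
      volume (Metric.closedBall x r \ {y | ‖f y - f x‖ ≤ j * ‖y - x‖}) <
        (1 / 2) * ((1 / 2) ^ k * volume (Metric.closedBall x r)) := by
  have h1 := h 1 one_pos
  set S := {y | y ∈ Ω \ {x} ∧ ‖f y - f x - A (y - x)‖ / ‖y - x‖ < 1}
  set δ : ℝ≥0∞ := (1 / 2) * (1 / 2) ^ k with hδ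
  have hhalf : (1 / 2 : ℝ≥0∞) ≤ 1 := by simp
  have hδ1 : δ ≤ 1 := mul_le_one' hhalf (pow_le_one' hhalf k)
  have hδ0 : δ ≠ 0 := by simp [hδ]
  have hlt : 1 - δ < 1 := ENNReal.sub_lt_self ENNReal.one_ne_top one_ne_zero hδ0
  obtain ⟨ρ, hρ, hρS⟩ := mem_nhdsGT_iff_exists_Ioo_subset.1 (h1.eventually_const_lt hlt)
  have hρ : 0 < ρ := hρ
  obtain ⟨j₁, hj₁⟩ := exists_nat_one_div_lt hρ
  obtain ⟨j₂, hj₂⟩ := exists_nat_ge (‖A‖ + 1)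
  refine ⟨max j₁ j₂, fun r hr hr' => ?_⟩
  have hrρ : r < ρ := by
    refine hr'.trans_le (le_trans ?_ hj₁.le)
    gcongr
    exact le_max_left _ _
  set G := {y | ‖f y - f x‖ ≤ (max j₁ j₂ : ℕ) * ‖y - x‖}
  set B := Metric.closedBall x r
  have hB0 : volume B ≠ 0 := (Metric.measure_closedBall_pos _ _ hr).ne'
  have hBt : volume B ≠ ∞ := measure_closedBall_lt_top.ne
  have hSG : S ⊆ G := by
    rintro y ⟨⟨-, hyx⟩, hy⟩
    have hpos : 0 < ‖y - x‖ := norm_pos_iff.2 (sub_ne_zero.2 hyx)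
    rw [div_lt_one hpos] at hy
    have hC : ‖A‖ + 1 ≤ (max j₁ j₂ : ℕ) := hj₂.trans (by exact_mod_cast le_max_right _ _)
    calc ‖f y - f x‖ = ‖(f y - f x - A (y - x)) + A (y - x)‖ := by rw [sub_add_cancel]
      _ ≤ ‖f y - f x - A (y - x)‖ + ‖A (y - x)‖ := norm_add_le _ _
      _ ≤ ‖y - x‖ + ‖A‖ * ‖y - x‖ := add_le_add hy.le (A.le_opNorm _)
      _ = (‖A‖ + 1) * ‖y - x‖ := by ring
      _ ≤ _ := by gcongr
  have hratio : 1 - δ < volume (S ∩ B) / volume B := hρS ⟨hr, hrρ⟩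
  rw [ENNReal.lt_div_iff_mul_lt (Or.inl hB0) (Or.inl hBt)] at hratio
  rw [← mul_assoc, ← hδ]
  by_contra! hcon
  have hsum : (1 - δ) * volume B + δ * volume B < volume (B ∩ G) + volume (B \ G) := by
    refine ENNReal.add_lt_add_of_lt_of_le ?_ (hratio.trans_le (measure_mono ?_)) hcon
    · exact ENNReal.mul_ne_top (ne_top_of_le_ne_top ENNReal.one_ne_top hδ1) hBt
    · exact fun y hy => ⟨hy.2, hSG hy.1⟩
  rw [← add_mul, tsub_add_cancel_of_le hδ1, one_mul,
    measure_inter_add_sdiff _ (measurableSet_slope_le hf x _)] at hsum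
  exact lt_irrefl _ hsum

lemma norm_sub_le_of_slope_le {f : 𝔼 → 𝔼} {x y : 𝔼} {C : ℝ} (hC : 0 ≤ C)
    (hx : volume (Metric.closedBall x ‖x - y‖ \ {z | ‖f z - f x‖ ≤ C * ‖z - x‖}) <
      (1 / 2) * ((1 / 2) ^ k * volume (Metric.closedBall x ‖x - y‖)))
    (hy : volume (Metric.closedBall y ‖x - y‖ \ {z | ‖f z - f y‖ ≤ C * ‖z - y‖}) <
      (1 / 2) * ((1 / 2) ^ k * volume (Metric.closedBall y ‖x - y‖))) :
    ‖f x - f y‖ ≤ 2 * C * ‖x - y‖ := by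
  set r := ‖x - y‖ with hr
  have hr0 : 0 ≤ r := norm_nonneg _
  set B := Metric.closedBall (midpoint ℝ x y) (r / 2) with hB
  have hBx : B ⊆ Metric.closedBall x r := Metric.closedBall_subset_closedBall' (by
    rw [dist_midpoint_left, dist_eq_norm, ← hr]
    norm_num
    linarith)
  have hBy : B ⊆ Metric.closedBall y r := Metric.closedBall_subset_closedBall' (by
    rw [dist_midpoint_right, dist_eq_norm, ← hr]
    norm_num
    linarith)
  rw [← volume_closedBall_half x (midpoint ℝ x y) hr0, ← hB] at hx
  rw [← volume_closedBall_half y (midpoint ℝ x y) hr0, ← hB] at hy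
  obtain ⟨z, hzB, hzx, hzy⟩ : ∃ z ∈ B, ‖f z - f x‖ ≤ C * ‖z - x‖ ∧
      ‖f z - f y‖ ≤ C * ‖z - y‖ := by
    by_contra! hcon
    have hsub : B ⊆ (Metric.closedBall x r \ {z | ‖f z - f x‖ ≤ C * ‖z - x‖}) ∪
        (Metric.closedBall y r \ {z | ‖f z - f y‖ ≤ C * ‖z - y‖}) := fun z hz => by
      by_cases h : ‖f z - f x‖ ≤ C * ‖z - x‖
      · exact Or.inr ⟨hBy hz, not_le.2 (hcon z hz h)⟩
      · exact Or.inl ⟨hBx hz, h⟩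
    have hlt := ((measure_mono hsub).trans (measure_union_le _ _)).trans_lt
      (ENNReal.add_lt_add hx hy)
    rw [← add_mul, one_div, ENNReal.inv_two_add_inv_two, one_mul] at hlt
    exact lt_irrefl _ hlt
  have h1 : ‖z - x‖ ≤ r := by simpa [dist_eq_norm] using hBx hzB
  have h2 : ‖z - y‖ ≤ r := by simpa [dist_eq_norm] using hBy hzB
  calc ‖f x - f y‖ = ‖(f z - f y) - (f z - f x)‖ := by rw [sub_sub_sub_cancel_left]
    _ ≤ ‖f z - f y‖ + ‖f z - f x‖ := norm_sub_le _ _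
    _ ≤ C * r + C * r := by
      gcongr
      · exact hzy.trans (by gcongr)
      · exact hzx.trans (by gcongr)
    _ = 2 * C * r := by ring

/-- An a.e. approximately differentiable map agrees almost everywhere with one of countably many
Lipschitz maps. -/
lemma exists_lipschitz_cover {Ω : Set 𝔼} {f : 𝔼 → 𝔼} (hf : Measurable f)
    (hdiff : ∀ᵐ x ∂(volume.restrict Ω), ∃ A, HasApproxDerivAt Ω f A x) :
    ∃ F : ℕ → 𝔼 → 𝔼, (∀ j, ∃ C, LipschitzWith C (F j)) ∧
      ∀ᵐ x ∂(volume.restrict Ω), ∃ j, f x = F j x := by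
  let S : ℕ → Set 𝔼 := fun j => {x | ∀ r : ℝ, 0 < r → r < 1 / ((j : ℝ) + 1) →
      volume (Metric.closedBall x r \ {y | ‖f y - f x‖ ≤ j * ‖y - x‖}) <
        (1 / 2) * ((1 / 2) ^ k * volume (Metric.closedBall x r))}
  let q : ℕ → 𝔼 := TopologicalSpace.denseSeq 𝔼
  let U : ℕ → ℕ → Set 𝔼 := fun j i => S j ∩ Metric.ball (q i) (1 / ((j : ℝ) + 1) / 2)
  have hLip : ∀ j i : ℕ, LipschitzOnWith (2 * (j : NNReal)) f (U j i) := fun j i => by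
    refine LipschitzOnWith.of_dist_le_mul fun x hx y hy => ?_
    rw [dist_eq_norm, dist_eq_norm]
    push_cast
    rcases eq_or_ne x y with rfl | hxy
    · simp
    have hpos : 0 < ‖x - y‖ := norm_pos_iff.2 (sub_ne_zero.2 hxy)
    have hlt : ‖x - y‖ < 1 / ((j : ℝ) + 1) := by
      rw [← dist_eq_norm]
      have h1 : dist x (q i) < 1 / ((j : ℝ) + 1) / 2 := hx.2
      have h2 : dist y (q i) < 1 / ((j : ℝ) + 1) / 2 := hy.2
      linarith [dist_triangle_right x y (q i)]
    exact norm_sub_le_of_slope_le (Nat.cast_nonneg j) (hx.1 _ hpos hlt) (hy.1 _ hpos hlt)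
  choose F hF hFeq using fun p : ℕ => (hLip p.unpair.1 p.unpair.2).extend_finite_dimension
  refine ⟨F, fun p => ⟨_, hF p⟩, ?_⟩
  filter_upwards [hdiff] with x ⟨A, hA⟩
  obtain ⟨j, hj⟩ := hA.exists_slope_le hf
  obtain ⟨i, hi⟩ := (TopologicalSpace.denseRange_denseSeq 𝔼).exists_dist_lt x
    (ε := 1 / ((j : ℝ) + 1) / 2) (by positivity)
  refine ⟨Nat.pair j i, hFeq _ ?_⟩
  rw [Nat.unpair_pair]
  exact ⟨hj, hi⟩

lemma HasFDerivAt.hasApproxDerivAt_of_isDensityPt [Nontrivial 𝔼] {Ω R : Set 𝔼} {f F : 𝔼 → 𝔼}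
    {A : 𝔼 →L[ℝ] 𝔼} {x : 𝔼} (hF : HasFDerivAt F A x) (hRΩ : R ⊆ Ω) (hfF : EqOn f F R)
    (hx : x ∈ R) (hd : IsDensityPt R x) : HasApproxDerivAt Ω f A x := by
  intro ε hε
  obtain ⟨δ, hδ, hδF⟩ := Metric.eventually_nhds_iff.1 (hF.isLittleO.def (half_pos hε))
  refine tendsto_of_tendsto_of_tendsto_of_le_of_le' hd tendsto_const_nhds ?_
    (Eventually.of_forall fun r => ?_)
  · filter_upwards [Ioo_mem_nhdsGT hδ] with r hr
    gcongr ?_ / _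
    rw [← measure_sdiff_null (measure_singleton x)]
    refine measure_mono ?_
    rintro y ⟨⟨hyR, hyr⟩, hyx⟩
    have hpos : 0 < ‖y - x‖ := norm_pos_iff.2 (sub_ne_zero.2 hyx)
    refine ⟨⟨⟨hRΩ hyR, hyx⟩, ?_⟩, hyr⟩
    rw [hfF hyR, hfF hx, div_lt_iff₀ hpos]
    refine (hδF (lt_of_le_of_lt hyr hr.2)).trans_lt ?_
    gcongr
    linarith
  · exact ENNReal.div_le_of_le_mul (by rw [one_mul]; exact measure_mono inter_subset_right)

lemma exists_injOn_cover_of_differentiable [Nontrivial 𝔼] (F : 𝔼 → 𝔼) (s : Set 𝔼)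
    (hs : ∀ x ∈ s, DifferentiableAt ℝ F x ∧ (fderiv ℝ F x).det ≠ 0) :
    ∃ t : ℕ → Set 𝔼, (∀ i, MeasurableSet (t i)) ∧ s ⊆ ⋃ i, t i ∧ ∀ i, InjOn F (s ∩ t i) := by
  classical
  let r : (𝔼 →L[ℝ] 𝔼) → NNReal := fun A =>
    if h : A.det ≠ 0 then ‖((A.toContinuousLinearEquivOfDetNeZero h).symm : 𝔼 →L[ℝ] 𝔼)‖₊⁻¹ / 2
    else 1
  have hr : ∀ A, r A ≠ 0 := fun A => by
    by_cases h : A.det ≠ 0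
    · simp only [r, h, dif_pos, not_false_eq_true, ne_eq]
      exact (half_pos (inv_pos.2 (ContinuousLinearEquiv.nnnorm_symm_pos _))).ne'
    · simp only [r, dif_neg h]
      exact one_ne_zero
  obtain ⟨t, A, -, htm, hst, happ, hA⟩ := exists_partition_approximatesLinearOn_of_hasFDerivWithinAt
    F s (fderiv ℝ F) (fun x hx => (hs x hx).1.hasFDerivAt.hasFDerivWithinAt) r hr
  refine ⟨t, htm, hst, fun i => ?_⟩
  rcases s.eq_empty_or_nonempty with rfl | hne
  · simp
  obtain ⟨y, hy, hAy⟩ := hA hne i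
  have hdet : (A i).det ≠ 0 := hAy ▸ (hs y hy).2
  have happ' : ApproximatesLinearOn F
      ((A i).toContinuousLinearEquivOfDetNeZero hdet : 𝔼 →L[ℝ] 𝔼) (s ∩ t i) (r (A i)) := by
    rw [ContinuousLinearMap.coe_toContinuousLinearEquivOfDetNeZero]
    exact happ i
  refine happ'.injOn (Or.inr ?_)
  simp only [r, hdet, dif_pos, not_false_eq_true, ne_eq]
  exact NNReal.half_lt_self (inv_pos.2 (ContinuousLinearEquiv.nnnorm_symm_pos _)).ne'

lemma tsum_indicator_image_le {X Y : Type*} {Ω : Set X} {f : X → Y} {A : ℕ → Set X}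
    (hA : Pairwise (Function.onFun Disjoint A)) (hAΩ : ∀ p, A p ⊆ Ω) {K : ℕ} {y : Y}
    (hK : (f ⁻¹' {y} ∩ Ω).encard ≤ K) (G : Y → ℝ≥0∞) :
    ∑' p, (f '' A p).indicator G y ≤ K * G y := by
  classical
  rw [ENNReal.tsum_eq_iSup_sum]
  refine iSup_le fun s => ?_
  simp only [indicator_apply]
  rw [← Finset.sum_filter, Finset.sum_const, nsmul_eq_mul]
  gcongr
  set u := s.filter fun p => y ∈ f '' A p
  have hex : ∀ p : u, ∃ x, x ∈ A p ∧ f x = y := fun p => (Finset.mem_filter.1 p.2).2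
  choose x hxA hxy using hex
  have hinj : Function.Injective x := fun p p' h => by
    by_contra hne
    exact disjoint_left.1 (hA fun h' => hne (Subtype.ext h')) (hxA p) (h ▸ hxA p')
  have hsub : range x ⊆ f ⁻¹' {y} ∩ Ω := range_subset_iff.2 fun p => ⟨hxy p, hAΩ _ (hxA p)⟩
  have hle : (range x).encard ≤ K := (encard_le_encard hsub).trans hK
  rw [← image_univ, hinj.encard_image, encard_univ] at hle
  simpa using hle

/-- Change of variables inequality for approximately differentiable maps whose fibres have at
most `K` points. -/
lemma exists_lintegral_comp_le {Ω : Set 𝔼} (hΩ : MeasurableSet Ω) {f : 𝔼 → 𝔼}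
    (hf : Measurable f) (hmaps : MapsTo f Ω Ω)
    (hdiff : ∀ᵐ x ∂(volume.restrict Ω), ∃ A, HasApproxDerivAt Ω f A x) {K : ℕ}
    (hK : volume {x | x ∈ Ω ∧ (K : ℕ∞) < (f ⁻¹' {x} ∩ Ω).encard} = 0) {J : 𝔼 → ℝ}
    (hJ : ∀ x A, HasApproxDerivAt Ω f A x → J x = A.det)
    {w : 𝔼 → ℝ≥0∞} {c : ℝ≥0∞} (hc : c ≠ ∞)
    (hw : ∀ᵐ x ∂(volume.restrict Ω), w x ≤ c * ENNReal.ofReal |J x|) :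
    ∃ D ⊆ f '' Ω, MeasurableSet D ∧ ∀ G : 𝔼 → ℝ≥0∞, Measurable G →
      ∫⁻ x in Ω, w x * G (f x) ≤ c * (K * ∫⁻ y in D, G y) := by
  rcases subsingleton_or_nontrivial 𝔼 with hsub | hnt
  · have hnot : ∀ x A, ¬ HasApproxDerivAt Ω f A x := fun x A h => by
      have h1 := h 1 one_pos
      have hempty : {y | y ∈ Ω \ {x} ∧ ‖f y - f x - A (y - x)‖ / ‖y - x‖ < 1} = ∅ :=
        eq_empty_of_forall_notMem fun y hy => hy.1.2 (Subsingleton.elim y x)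
      rw [hempty] at h1
      simp only [IsDensityPt, empty_inter, measure_empty, ENNReal.zero_div] at h1
      exact zero_ne_one (tendsto_nhds_unique tendsto_const_nhds h1)
    have hfalse : ∀ᵐ x ∂(volume.restrict Ω), False := by
      filter_upwards [hdiff] with x ⟨A, hA⟩ using hnot x A hA
    have hzero : volume.restrict Ω = 0 := by
      rwa [eventually_false_iff_eq_bot, ae_eq_bot] at hfalse
    exact ⟨∅, empty_subset _, MeasurableSet.empty, fun G _ => by simp [hzero]⟩
  obtain ⟨F, hFlip, hcover⟩ := exists_lipschitz_cover hf hdiff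
  have hFc : ∀ j, Continuous (F j) := fun j => (hFlip j).choose_spec.continuous
  let R : ℕ → Set 𝔼 := fun j => {x | x ∈ Ω ∧ f x = F j x}
  have hRm : ∀ j, MeasurableSet (R j) := fun j =>
    hΩ.inter (measurableSet_eq_fun hf (hFc j).measurable)
  let s : ℕ → Set 𝔼 := fun j =>
    R j ∩ ({x | DifferentiableAt ℝ (F j) x} ∩ {x | (fderiv ℝ (F j) x).det ≠ 0})
  have hsm : ∀ j, MeasurableSet (s j) := fun j =>
    (hRm j).inter ((measurableSet_of_differentiableAt ℝ (F j)).inter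
      ((ContinuousLinearMap.continuous_det.measurable.comp (measurable_fderiv ℝ (F j)))
        (measurableSet_singleton 0).compl))
  have hJdet : ∀ᵐ x, ∀ j, x ∈ R j → DifferentiableAt ℝ (F j) x ∧
      J x = (fderiv ℝ (F j) x).det := by
    refine ae_all_iff.2 fun j => ?_
    have h1 := Besicovitch.ae_tendsto_measure_inter_div (volume : Measure 𝔼) (R j)
    rw [ae_restrict_iff' (hRm j)] at h1
    filter_upwards [h1, (hFlip j).choose_spec.ae_differentiableAt] with x hx hdx hxR
    exact ⟨hdx, hJ x _ (hdx.hasFDerivAt.hasApproxDerivAt_of_isDensityPt (fun y hy => hy.1)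
      (fun y hy => hy.2) hxR (hx hxR))⟩
  choose t htm hst hinj using fun j => exists_injOn_cover_of_differentiable (F j) (s j)
    fun x hx => hx.2
  let B : ℕ → Set 𝔼 := fun p => s p.unpair.1 ∩ t p.unpair.1 p.unpair.2
  let A : ℕ → Set 𝔼 := disjointed B
  have hAB : ∀ p, A p ⊆ B p := disjointed_subset B
  have hAs : ∀ p, A p ⊆ s p.unpair.1 := fun p => (hAB p).trans inter_subset_left
  have hAm : ∀ p, MeasurableSet (A p) := MeasurableSet.disjointed fun p =>
    (hsm _).inter (htm _ _)
  have hAd : Pairwise (Function.onFun Disjoint A) := disjoint_disjointed B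
  have hAΩ : ∀ p, A p ⊆ Ω := fun p x hx => (hAs p hx).1.1
  have hAinj : ∀ p, InjOn (F p.unpair.1) (A p) := fun p => (hinj _ _).mono (hAB p)
  have hAderiv : ∀ p, ∀ x ∈ A p, HasFDerivWithinAt (F p.unpair.1)
      (fderiv ℝ (F p.unpair.1) x) (A p) x := fun p x hx =>
    (hAs p hx).2.1.hasFDerivAt.hasFDerivWithinAt
  have himage : ∀ p, f '' A p = F p.unpair.1 '' A p := fun p =>
    image_congr fun x hx => (hAs p hx).1.2
  have himagem : ∀ p, MeasurableSet (f '' A p) := fun p => by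
    rw [himage]
    exact measurable_image_of_fderivWithin (hAm p) (hAderiv p) (hAinj p)
  have hU : ∀ᵐ x ∂(volume.restrict Ω), w x ≠ 0 → x ∈ ⋃ p, A p := by
    filter_upwards [hcover, hw, ae_restrict_of_ae hJdet, ae_restrict_mem hΩ]
      with x ⟨j, hj⟩ hwx hJx hxΩ hw0
    obtain ⟨hdx, hJx⟩ := hJx j ⟨hxΩ, hj⟩
    have hxs : x ∈ s j := by
      refine ⟨⟨hxΩ, hj⟩, hdx, fun h0 => hw0 ?_⟩
      rw [hJx, h0, abs_zero, ENNReal.ofReal_zero, mul_zero] at hwx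
      exact le_antisymm hwx bot_le
    obtain ⟨i, hi⟩ := mem_iUnion.1 (hst j hxs)
    rw [iUnion_disjointed]
    refine mem_iUnion.2 ⟨Nat.pair j i, ?_⟩
    simp only [B, Nat.unpair_pair]
    exact ⟨hxs, hi⟩
  have hUm : MeasurableSet (⋃ p, A p) := MeasurableSet.iUnion hAm
  refine ⟨⋃ p, f '' A p, iUnion_subset fun p => image_mono (hAΩ p),
    MeasurableSet.iUnion himagem, fun G hG => ?_⟩
  have hpiece : ∀ p, ∫⁻ x in A p, w x * G (f x) ≤ c * ∫⁻ y, (f '' A p).indicator G y := fun p => by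
    rw [lintegral_indicator (himagem p), himage,
      lintegral_image_eq_lintegral_abs_det_fderiv_mul _ (hAm p) (hAderiv p) (hAinj p),
      ← lintegral_const_mul' _ _ hc]
    refine lintegral_mono_ae ?_
    filter_upwards [ae_restrict_mem (hAm p), ae_restrict_of_ae hJdet,
      ae_restrict_of_ae_restrict_of_subset (hAΩ p) hw] with x hx hJx hwx
    rw [← mul_assoc, ← (hJx _ (hAs p hx).1).2, ← (hAs p hx).1.2]
    gcongr
  calc ∫⁻ x in Ω, w x * G (f x)
      ≤ ∫⁻ x in Ω, (⋃ p, A p).indicator (fun x => w x * G (f x)) x := by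
        refine lintegral_mono_ae ?_
        filter_upwards [hU] with x hx
        by_cases h0 : w x = 0
        · simp [h0]
        · rw [indicator_of_mem (hx h0)]
    _ ≤ ∫⁻ x, (⋃ p, A p).indicator (fun x => w x * G (f x)) x := setLIntegral_le_lintegral _ _
    _ = ∑' p, ∫⁻ x in A p, w x * G (f x) := by
        rw [lintegral_indicator hUm, lintegral_iUnion hAm hAd]
    _ ≤ ∑' p, c * ∫⁻ y, (f '' A p).indicator G y := ENNReal.tsum_le_tsum hpiece
    _ = c * ∫⁻ y, ∑' p, (f '' A p).indicator G y := by
        rw [ENNReal.tsum_mul_left,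
          lintegral_tsum fun p => (hG.indicator (himagem p)).aemeasurable]
    _ ≤ c * ∫⁻ y, (⋃ p, f '' A p).indicator (fun y => K * G y) y := by
        gcongr c * ?_
        refine lintegral_mono_ae ?_
        filter_upwards [measure_eq_zero_iff_ae_notMem.1 hK] with y hy
        by_cases hyD : y ∈ ⋃ p, f '' A p
        · rw [indicator_of_mem hyD]
          refine tsum_indicator_image_le hAd hAΩ (not_lt.1 fun h => hy ⟨?_, h⟩) G
          obtain ⟨p, x, hx, rfl⟩ := mem_iUnion.1 hyD
          exact hmaps (hAΩ p hx)
        · rw [indicator_of_notMem hyD]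
          refine (ENNReal.tsum_eq_zero.2 fun p => ?_).le
          exact indicator_of_notMem (fun h => hyD (mem_iUnion.2 ⟨p, h⟩)) _
    _ = c * (K * ∫⁻ y in ⋃ p, f '' A p, G y) := by
        rw [lintegral_indicator (MeasurableSet.iUnion himagem),
          lintegral_const_mul' _ _ (ENNReal.natCast_ne_top K)]

end ApproxDeriv

section CompositionOperator

lemma ae_restrict_comp {X : Type*} [MeasurableSpace X] {μ : Measure X} {Ω : Set X}
    (hΩ : MeasurableSet Ω) {f : X → X} (hmaps : MapsTo f Ω Ω)
    (hpreim : ∀ M, μ M = 0 → μ (f ⁻¹' M) = 0) {p : X → Prop}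
    (h : ∀ᵐ x ∂(μ.restrict Ω), p x) : ∀ᵐ x ∂(μ.restrict Ω), p (f x) := by
  rw [ae_restrict_iff' hΩ] at h ⊢
  filter_upwards [measure_eq_zero_iff_ae_notMem.1 (hpreim _ (ae_iff.1 h))] with x hx hxΩ
  exact of_not_not fun hp => hx fun hp' => hp (hp' (hmaps hxΩ))

lemma sum_setLIntegral_le {X ι : Type*} [MeasurableSpace X] {μ : Measure X} [Fintype ι] {L : ℕ}
    {D : ι → Set X} {Ω : Set X} (hD : ∀ n, MeasurableSet (D n)) (hΩ : MeasurableSet Ω)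
    (hDΩ : ∀ n, D n ⊆ Ω) (hL : ∀ s : Finset ι, L < s.card → μ (⋂ n ∈ s, D n) = 0)
    {G : X → ℝ≥0∞} (hG : Measurable G) :
    ∑ n, ∫⁻ y in D n, G y ∂μ ≤ L * ∫⁻ y in Ω, G y ∂μ := by
  classical
  have hover : ∀ᵐ y ∂μ, ∀ s : Finset ι, L < s.card → y ∉ ⋂ n ∈ s, D n := by
    refine ae_all_iff.2 fun s => ?_
    by_cases hs : L < s.card
    · filter_upwards [measure_eq_zero_iff_ae_notMem.1 (hL s hs)] with y hy _ using hy
    · exact Eventually.of_forall fun y h => absurd h hs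
  calc ∑ n, ∫⁻ y in D n, G y ∂μ = ∫⁻ y, ∑ n, (D n).indicator G y ∂μ := by
        rw [lintegral_finsetSum _ fun n _ => hG.indicator (hD n)]
        simp only [lintegral_indicator (hD _)]
    _ ≤ ∫⁻ y, Ω.indicator (fun y => L * G y) y ∂μ := by
        refine lintegral_mono_ae ?_
        filter_upwards [hover] with y hy
        by_cases hyΩ : y ∈ Ω
        · rw [indicator_of_mem hyΩ]
          simp only [indicator_apply]
          rw [← Finset.sum_filter, Finset.sum_const, nsmul_eq_mul]
          gcongr
          by_contra! hcard
          exact hy _ hcard (mem_iInter₂.2 fun n hn => (Finset.mem_filter.1 hn).2)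
        · rw [indicator_of_notMem hyΩ]
          exact (Finset.sum_eq_zero fun n _ => indicator_of_notMem (fun h => hyΩ (hDΩ n h)) _).le
    _ = L * ∫⁻ y in Ω, G y ∂μ := by
        rw [lintegral_indicator hΩ, lintegral_const_mul' _ _ (ENNReal.natCast_ne_top L)]

variable {k N : ℕ} {𝕜 : Type*} [RCLike 𝕜]

local notation "𝔼" => EuclideanSpace ℝ (Fin k)

/-- The positive operator `G ↦ ∑ n, |g n| · (G ∘ f n)` dominating `Pop f g`. -/
noncomputable def absPop (f : Fin N → 𝔼 → 𝔼) (g : Fin N → 𝔼 → 𝕜) (G : 𝔼 → ℝ≥0∞) : 𝔼 → ℝ≥0∞ :=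
  fun x => ∑ n : Fin N, ‖g n x‖ₑ * G (f n x)

lemma enorm_Pop_iterate_le (f : Fin N → 𝔼 → 𝔼) (g : Fin N → 𝔼 → 𝕜) (h : 𝔼 → 𝕜) (n : ℕ) (x : 𝔼) :
    ‖(Pop f g)^[n] h x‖ₑ ≤ (absPop f g)^[n] (fun y => ‖h y‖ₑ) x := by
  induction n generalizing x with
  | zero => rfl
  | succ n ih =>
    rw [Function.iterate_succ_apply', Function.iterate_succ_apply']
    refine (enorm_sum_le _ _).trans (Finset.sum_le_sum fun i _ => ?_)
    rw [enorm_mul]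
    gcongr
    exact ih _

lemma measurable_Pop_iterate {f : Fin N → 𝔼 → 𝔼} {g : Fin N → 𝔼 → 𝕜} {h : 𝔼 → 𝕜}
    (hf : ∀ n, Measurable (f n)) (hg : ∀ n, Measurable (g n)) (hh : Measurable h) (n : ℕ) :
    Measurable ((Pop f g)^[n] h) := by
  induction n with
  | zero => exact hh
  | succ n ih =>
    rw [Function.iterate_succ_apply']
    exact Finset.measurable_fun_sum _ fun i _ => (hg i).mul (ih.comp (hf i))

lemma sum_range_succ_Pop_iterate (f : Fin N → 𝔼 → 𝔼) (g : Fin N → 𝔼 → 𝕜) (h : 𝔼 → 𝕜) (m : ℕ)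
    (x : 𝔼) : ∑ i ∈ Finset.range (m + 1), (Pop f g)^[i] h x =
      (∑ n, g n x * ∑ i ∈ Finset.range m, (Pop f g)^[i] h (f n x)) + h x := by
  rw [Finset.sum_range_succ', Function.iterate_zero_apply]
  simp only [Function.iterate_succ_apply', Finset.mul_sum]
  rw [Finset.sum_comm]
  rfl

lemma absPop_positiveContraction {Ω : Set 𝔼} (hΩ : MeasurableSet Ω)
    {f : Fin N → 𝔼 → 𝔼} {g : Fin N → 𝔼 → 𝕜} (hmaps : ∀ n, MapsTo (f n) Ω Ω)
    (hf : ∀ n, Measurable (f n)) (hgm : ∀ n, Measurable (g n))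
    (hdiff : ∀ n, ∀ᵐ x ∂(volume.restrict Ω), ∃ A, HasApproxDerivAt Ω (f n) A x)
    (hpreim : ∀ n, ∀ M : Set 𝔼, volume M = 0 → volume (f n ⁻¹' M) = 0) {K : ℕ}
    (hK : ∀ n, volume {x | x ∈ Ω ∧ (K : ℕ∞) < (f n ⁻¹' {x} ∩ Ω).encard} = 0) {L : ℕ}
    (hL : ∀ s : Finset (Fin N), L < s.card → volume (⋂ n ∈ s, f n '' Ω) = 0)
    {J : Fin N → 𝔼 → ℝ} (hJ : ∀ n x A, HasApproxDerivAt Ω (f n) A x → J n x = A.det)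
    {α : ℝ} (hα : 0 ≤ α) (hg : ∀ n, ∀ᵐ x ∂(volume.restrict Ω),
      ‖g n x‖ ≤ α * min (|J n x| / ((K : ℝ) * (L : ℝ))) (1 / (N : ℝ))) :
    PositiveContraction (volume.restrict Ω) (absPop f g) α := by
  refine ⟨hα, fun G hG => ?_, ?_, fun G H => ?_, fun G H h x => ?_, fun G hG c hc => ?_,
    fun G hG => ?_⟩
  · exact Finset.measurable_fun_sum _ fun n _ => (hgm n).enorm.mul (hG.comp (hf n))
  · ext x
    simp [absPop]
  · ext x
    simp [absPop, mul_add, Finset.sum_add_distrib]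
  · exact tendsto_finsetSum _ fun n _ => ENNReal.Tendsto.const_mul (h _) (Or.inr enorm_ne_top)
  · have hcf := ae_all_iff.2 fun n => ae_restrict_comp hΩ (hmaps n) (hpreim n) hc
    filter_upwards [hcf, ae_all_iff.2 hg] with x hx hgx
    calc absPop f g G x ≤ ∑ _n : Fin N, ENNReal.ofReal (α * (1 / N)) * c := by
          refine Finset.sum_le_sum fun n _ => mul_le_mul' ?_ (hx n)
          rw [← ofReal_norm]
          refine ENNReal.ofReal_le_ofReal ((hgx n).trans ?_)
          gcongr
          exact min_le_right _ _
      _ = ENNReal.ofReal (N * (α * (1 / N))) * c := by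
          rw [Finset.sum_const, Finset.card_univ, Fintype.card_fin, nsmul_eq_mul, ← mul_assoc,
            ENNReal.ofReal_mul N.cast_nonneg, ENNReal.ofReal_natCast]
      _ ≤ ENNReal.ofReal α * c := by
          gcongr
          rcases N.eq_zero_or_pos with rfl | hN
          · simpa using hα
          · have : (N : ℝ) ≠ 0 := by positivity
            exact (by field_simp : (N : ℝ) * (α * (1 / N)) = α).le
  · set c := ENNReal.ofReal (α / (K * L)) with hc
    have hw : ∀ n, ∀ᵐ x ∂(volume.restrict Ω), ‖g n x‖ₑ ≤ c * ENNReal.ofReal |J n x| := fun n => by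
      filter_upwards [hg n] with x hx
      rw [← ofReal_norm, hc, ← ENNReal.ofReal_mul (by positivity)]
      refine ENNReal.ofReal_le_ofReal (hx.trans ?_)
      rw [div_mul_eq_mul_div, mul_div_assoc]
      gcongr
      exact min_le_left _ _
    choose D hDf hDm hD using fun n => exists_lintegral_comp_le hΩ (hf n) (hmaps n) (hdiff n)
      (hK n) (hJ n) ENNReal.ofReal_ne_top (hw n)
    have hcKL : c * K * L ≤ ENNReal.ofReal α := by
      rw [hc, ← ENNReal.ofReal_natCast K, ← ENNReal.ofReal_natCast L,
        ← ENNReal.ofReal_mul (by positivity), ← ENNReal.ofReal_mul (by positivity), mul_assoc]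
      refine ENNReal.ofReal_le_ofReal ?_
      rcases (by positivity : (0 : ℝ) ≤ K * L).eq_or_lt with h | h
      · rwa [← h, mul_zero]
      · rw [div_mul_cancel₀ _ h.ne']
    calc ∫⁻ x in Ω, absPop f g G x = ∑ n, ∫⁻ x in Ω, ‖g n x‖ₑ * G (f n x) :=
          lintegral_finsetSum _ fun n _ => (hgm n).enorm.mul (hG.comp (hf n))
      _ ≤ ∑ n, c * (K * ∫⁻ y in D n, G y) := Finset.sum_le_sum fun n _ => hD n G hG
      _ = c * K * ∑ n, ∫⁻ y in D n, G y := by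
          rw [← Finset.mul_sum, ← Finset.mul_sum, mul_assoc]
      _ ≤ c * K * (L * ∫⁻ y in Ω, G y) := by
          gcongr
          refine sum_setLIntegral_le hDm hΩ (fun n => (hDf n).trans (hmaps n).image_subset)
            (fun s hs => measure_mono_null (iInter₂_mono fun n _ => hDf n) (hL s hs)) hG
      _ ≤ ENNReal.ofReal α * ∫⁻ y in Ω, G y := by
          rw [← mul_assoc]
          gcongr

lemma lorentzNorm_eq_lorentzGauge {Ω : Set 𝔼} (hΩ : MeasurableSet Ω) (σ : ℝ → ℝ) (u : 𝔼 → 𝕜) :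
    lorentzNorm Ω σ u = lorentzGauge (volume.restrict Ω) (extInv σ) (fun x => ‖u x‖ₑ) := by
  refine setLIntegral_congr_fun measurableSet_Ioi fun s hs => ?_
  have hset : {x | ENNReal.ofReal s < ‖u x‖ₑ} ∩ Ω = {x | x ∈ Ω ∧ s < ‖u x‖} := by
    ext x
    rw [mem_inter_iff, and_comm, mem_ofPred_eq, ← ofReal_norm,
      ENNReal.ofReal_lt_ofReal_iff_of_nonneg (le_of_lt hs)]
    rfl
  simp only [distribFn]
  rw [Measure.restrict_apply' hΩ, hset]

lemma memLorentz_of_measurable {Ω : Set 𝔼} (hΩ : MeasurableSet Ω) {σ : ℝ → ℝ}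
    (hE : QuasiconcaveGauge (extInv σ)) {u : 𝔼 → 𝕜} (hu : Measurable u)
    (h : lorentzNorm Ω σ u < ∞) : MemLorentz Ω σ u := by
  refine ⟨hu, fun x _ => ?_, h⟩
  refine ⟨Ω ∩ Metric.ball x 1, inter_mem self_mem_nhdsWithin
    (mem_nhdsWithin_of_mem_nhds (Metric.ball_mem_nhds x one_pos)), hu.aestronglyMeasurable, ?_⟩
  rw [lorentzNorm_eq_lorentzGauge hΩ] at h
  have hfin := setLIntegral_lt_top_of_lorentzGauge_ne_top hE hu.norm (fun _ => norm_nonneg _)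
    (by simpa only [ofReal_norm] using h.ne) (S := Metric.ball x 1) measurableSet_ball
    (ne_top_of_le_ne_top measure_ball_lt_top.ne (Measure.restrict_apply_le _ _))
  rw [Measure.restrict_restrict measurableSet_ball, inter_comm] at hfin
  simpa only [ofReal_norm, HasFiniteIntegral] using hfin

/-- Convergence of the Neumann series of `Pop f g` in the Lorentz space when the dominating
positive operator is a contraction. -/
lemma exists_neumann_series {Ω : Set 𝔼} (hΩ : MeasurableSet Ω) {f : Fin N → 𝔼 → 𝔼}
    {g : Fin N → 𝔼 → 𝕜} (hmaps : ∀ n, MapsTo (f n) Ω Ω)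
    (hf : ∀ n, Measurable (f n)) (hgm : ∀ n, Measurable (g n))
    (hpreim : ∀ n, ∀ M : Set 𝔼, volume M = 0 → volume (f n ⁻¹' M) = 0)
    {σ : ℝ → ℝ} (hE : QuasiconcaveGauge (extInv σ)) {α : ℝ} (hα : α < 1 / 2)
    (hT : PositiveContraction (volume.restrict Ω) (absPop f g) α)
    {h0 : 𝔼 → 𝕜} (hh0 : MemLorentz Ω σ h0) :
    ∃ φ : 𝔼 → 𝕜, MemLorentz Ω σ φ ∧
      Tendsto (fun m => lorentzNorm Ω σ
          (fun x => (∑ n ∈ Finset.range m, (Pop f g)^[n] h0 x) - φ x))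
        atTop (𝓝 0) ∧
      (∀ᵐ x ∂(volume.restrict Ω), φ x = (∑ n : Fin N, g n x * φ (f n x)) + h0 x) ∧
      (∀ φ' : 𝔼 → 𝕜, MemLorentz Ω σ φ' →
        (∀ᵐ x ∂(volume.restrict Ω), φ' x = (∑ n : Fin N, g n x * φ' (f n x)) + h0 x) →
        φ' =ᵐ[volume.restrict Ω] φ) ∧
      (∀ m : ℕ, lorentzNorm Ω σ
          (fun x => φ x - ∑ n ∈ Finset.range m, (Pop f g)^[n] h0 x) ≤
        ENNReal.ofReal ((2 * α) ^ m / (1 - 2 * α)) * lorentzNorm Ω σ h0) := by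
  have hα0 := hT.nonneg
  have hfinite : ∀ {u : 𝔼 → 𝕜}, MemLorentz Ω σ u →
      ∀ᵐ x ∂(volume.restrict Ω), ∑' i, (absPop f g)^[i] (fun y => ‖u y‖ₑ) x < ∞ := fun {u} hu => by
    refine ae_lt_top_of_lorentzGauge_ne_top hE (ne_top_of_le_ne_top ?_
      (lorentzGauge_tsum_iterate_le hE hT hα hu.1.enorm 0))
    rw [← lorentzNorm_eq_lorentzGauge hΩ]
    exact ENNReal.mul_ne_top ENNReal.ofReal_ne_top hu.2.2.ne
  set A := {x | ∑' i, (absPop f g)^[i] (fun y => ‖h0 y‖ₑ) x < ∞}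
  have hA : ∀ᵐ x ∂(volume.restrict Ω), x ∈ A := hfinite hh0
  have hAm : MeasurableSet A := measurableSet_lt
    (Measurable.tsum fun i => (hT.iterate i).measurable _ hh0.1.enorm) measurable_const
  have hsum : ∀ x ∈ A, Summable fun i => (Pop f g)^[i] h0 x := fun x hx => by
    refine Summable.of_enorm (ne_top_of_le_ne_top (LT.lt.ne hx) ?_)
    exact ENNReal.tsum_le_tsum fun i => enorm_Pop_iterate_le f g h0 i x
  let φ : 𝔼 → 𝕜 := A.indicator fun x => ∑' i, (Pop f g)^[i] h0 x
  have hlim : ∀ x ∈ A, Tendsto (fun m => ∑ i ∈ Finset.range m, (Pop f g)^[i] h0 x) atTop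
      (𝓝 (φ x)) := fun x hx => by
    simp only [φ, indicator_of_mem hx]
    exact (hsum x hx).hasSum.tendsto_sum_nat
  have hφm : Measurable φ := by
    refine measurable_of_tendsto_metrizable (f := fun m => A.indicator fun x =>
      ∑ i ∈ Finset.range m, (Pop f g)^[i] h0 x) (fun m => (Finset.measurable_fun_sum _ fun i _ =>
        measurable_Pop_iterate hf hgm hh0.1 i).indicator hAm) (tendsto_pi_nhds.2 fun x => ?_)
    by_cases hx : x ∈ A
    · simpa only [indicator_of_mem hx] using hlim x hx
    · simp only [φ, indicator_of_notMem hx, tendsto_const_nhds]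
  have htail : ∀ m : ℕ, lorentzNorm Ω σ
      (fun x => φ x - ∑ n ∈ Finset.range m, (Pop f g)^[n] h0 x) ≤
        ENNReal.ofReal ((2 * α) ^ m / (1 - 2 * α)) * lorentzNorm Ω σ h0 := fun m => by
    rw [lorentzNorm_eq_lorentzGauge hΩ, lorentzNorm_eq_lorentzGauge hΩ]
    refine (lorentzGauge_mono_ae hE ?_).trans
      (lorentzGauge_tsum_iterate_le hE hT hα hh0.1.enorm m)
    filter_upwards [hA] with x hx
    simp only [φ, indicator_of_mem hx]
    rw [← (hsum x hx).sum_add_tsum_nat_add m, add_sub_cancel_left]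
    exact enorm_tsum_le_tsum_enorm.trans
      (ENNReal.tsum_le_tsum fun i => enorm_Pop_iterate_le f g h0 (i + m) x)
  refine ⟨φ, memLorentz_of_measurable hΩ hE hφm ?_, ?_, ?_, fun φ' hφ' hsol => ?_, htail⟩
  · have h := htail 0
    simp only [Finset.range_zero, Finset.sum_empty, sub_zero] at h
    exact h.trans_lt (ENNReal.mul_lt_top ENNReal.ofReal_lt_top hh0.2.2)
  · have hgeom : Tendsto (fun m : ℕ => ENNReal.ofReal ((2 * α) ^ m / (1 - 2 * α)) *
        lorentzNorm Ω σ h0) atTop (𝓝 0) := by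
      have h1 : Tendsto (fun m : ℕ => (2 * α) ^ m / (1 - 2 * α)) atTop (𝓝 0) := by
        simpa using (tendsto_pow_atTop_nhds_zero_of_lt_one (by linarith) (by linarith)).div_const
          (1 - 2 * α)
      simpa using ENNReal.Tendsto.mul_const (ENNReal.tendsto_ofReal h1) (Or.inr hh0.2.2.ne)
    refine tendsto_of_tendsto_of_tendsto_of_le_of_le tendsto_const_nhds hgeom (fun _ => bot_le)
      fun m => le_trans (le_of_eq ?_) (htail m)
    simp only [lorentzNorm, distribFn, norm_sub_rev]
  · have hAf := ae_all_iff.2 fun n => ae_restrict_comp hΩ (hmaps n) (hpreim n) hA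
    filter_upwards [hA, hAf] with x hx hxf
    refine tendsto_nhds_unique ((hlim x hx).comp (tendsto_add_atTop_nat 1)) ?_
    simp only [Function.comp_def, sum_range_succ_Pop_iterate]
    exact (tendsto_finsetSum _ fun n _ => (hlim _ (hxf n)).const_mul _).add_const _
  · have hiter : ∀ m, ∀ᵐ x ∂(volume.restrict Ω),
        φ' x = ∑ i ∈ Finset.range m, (Pop f g)^[i] h0 x + (Pop f g)^[m] φ' x := fun m => by
      induction m with
      | zero => exact Eventually.of_forall fun x => by simp
      | succ m ih =>
        have ihf := ae_all_iff.2 fun n => ae_restrict_comp hΩ (hmaps n) (hpreim n) ih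
        filter_upwards [hsol, ihf] with x hx hxf
        rw [hx, sum_range_succ_Pop_iterate, Function.iterate_succ_apply', Pop,
          add_right_comm, ← Finset.sum_add_distrib]
        congr 1
        exact Finset.sum_congr rfl fun n _ => by rw [hxf n, mul_add]
    filter_upwards [hA, hfinite hφ', ae_all_iff.2 hiter] with x hx hx' hxi
    have hzero : Tendsto (fun m => (Pop f g)^[m] φ' x) atTop (𝓝 0) := by
      rw [tendsto_zero_iff_enorm_tendsto_zero]
      exact tendsto_of_tendsto_of_tendsto_of_le_of_le tendsto_const_nhds
        (ENNReal.tendsto_atTop_zero_of_tsum_ne_top hx'.ne) (fun _ => bot_le)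
        fun m => enorm_Pop_iterate_le f g φ' m x
    have hadd := (hlim x hx).add hzero
    simp only [← hxi, add_zero] at hadd
    exact tendsto_nhds_unique tendsto_const_nhds hadd

end CompositionOperator

/-- Under hypothesis (H), if `h0 ∈ L^{ψ,1}(Ω,𝕜)` and
`|g_n(x)| ≤ α · min{|J_{f_n}(x)|/(K·L), 1/N}` a.e. for some `α ∈ [0, 1/2)`, then the
series `∑ Pⁿ h0` converges in `L^{ψ,1}(Ω,𝕜)` to the unique solution `φ` of
`φ = P φ + h0` in `L^{ψ,1}(Ω,𝕜)`, and for every `m`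
`‖∑_{n=m}^∞ Pⁿ h0‖ ≤ (2α)^m (1-2α)⁻¹ ‖h0‖`. -/
theorem stmt16 {k N : ℕ} {𝕜 : Type*} [RCLike 𝕜]
    (Ω : Set (EuclideanSpace ℝ (Fin k))) (hΩ : IsOpen Ω)
    (f : Fin N → EuclideanSpace ℝ (Fin k) → EuclideanSpace ℝ (Fin k))
    (hmaps : ∀ n, Set.MapsTo (f n) Ω Ω)
    (g : Fin N → EuclideanSpace ℝ (Fin k) → 𝕜) (h0 : EuclideanSpace ℝ (Fin k) → 𝕜)
    -- hypothesis (H):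
    (hfmeas : ∀ n, Measurable (f n))
    (hfdiff : ∀ n, ∀ᵐ x ∂(volume.restrict Ω), ∃ L, HasApproxDerivAt Ω (f n) L x)
    (hLuzinN : ∀ n, ∀ S ⊆ Ω, volume S = 0 → volume (f n '' S) = 0)
    (hpreim : ∀ n, ∀ M : Set (EuclideanSpace ℝ (Fin k)),
      volume M = 0 → volume (f n ⁻¹' M) = 0)
    (K : ℕ)
    (hK : ∀ n, volume {x | x ∈ Ω ∧ (K : ℕ∞) < (f n ⁻¹' {x} ∩ Ω).encard} = 0)
    (hgmeas : ∀ n, Measurable (g n)) (hh0meas : Measurable h0)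
    (L : ℕ)
    (hL : IsGreatest {l : ℕ | 1 ≤ l ∧ l ≤ N ∧ ∃ s : Finset (Fin N), s.card = l ∧
      0 < volume (⋂ n ∈ s, f n '' Ω)} L)
    -- the (approximate) Jacobians of the maps `f n`:
    (J : Fin N → EuclideanSpace ℝ (Fin k) → ℝ)
    (hJ : ∀ n x, ∀ L', HasApproxDerivAt Ω (f n) L' x → J n x = L'.det)
    (hJ0 : ∀ n x, ¬ (∃ L', HasApproxDerivAt Ω (f n) L' x) → J n x = 0)
    -- the Young function `ψ`, `τ` and `σ = τ⁻¹`: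
    (ψ : ℝ → ℝ) (hY : IsYoung ψ) (hsm : StrictMonoOn ψ (Set.Ici 0)) (hΔ : Delta2 ψ)
    (hψ0 : Tendsto (fun t => ψ t / t) (𝓝[>] 0) (𝓝 0))
    (hψtop : Tendsto (fun t => t / ψ t) atTop (𝓝 0))
    (τ : ℝ → ℝ) (hτ0 : τ 0 = 0) (hτ : ∀ t : ℝ, 0 < t → τ t = 1 / ψ (1 / t))
    (σ : ℝ → ℝ) (hσ_nonneg : ∀ t : ℝ, 0 ≤ t → 0 ≤ σ t)
    (hσ_left : ∀ t : ℝ, 0 ≤ t → σ (τ t) = t)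
    (hσ_right : ∀ t : ℝ, 0 ≤ t → τ (σ t) = t)
    -- `h0 ∈ L^{ψ,1}(Ω,𝕜)`:
    (hh0 : MemLorentz Ω σ h0)
    -- the contraction-type bound on the coefficients:
    (α : ℝ) (hα0 : 0 ≤ α) (hα : α < 1 / 2)
    (hg : ∀ n, ∀ᵐ x ∂(volume.restrict Ω),
      ‖g n x‖ ≤ α * min (|J n x| / ((K : ℝ) * (L : ℝ))) (1 / (N : ℝ))) :
    ∃ φ : EuclideanSpace ℝ (Fin k) → 𝕜, MemLorentz Ω σ φ ∧
      -- the series `∑_{n=0}^∞ Pⁿ h0` converges in `L^{ψ,1}(Ω,𝕜)` to `φ`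
      Tendsto (fun m => lorentzNorm Ω σ
          (fun x => (∑ n ∈ Finset.range m, (Pop f g)^[n] h0 x) - φ x))
        atTop (𝓝 0) ∧
      -- `φ` solves `φ = P φ + h0`
      (∀ᵐ x ∂(volume.restrict Ω), φ x = (∑ n : Fin N, g n x * φ (f n x)) + h0 x) ∧
      -- `φ` is the unique solution in `L^{ψ,1}(Ω,𝕜)`
      (∀ φ' : EuclideanSpace ℝ (Fin k) → 𝕜, MemLorentz Ω σ φ' →
        (∀ᵐ x ∂(volume.restrict Ω), φ' x = (∑ n : Fin N, g n x * φ' (f n x)) + h0 x) →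
        φ' =ᵐ[volume.restrict Ω] φ) ∧
      -- the norm estimate for the tails `∑_{n=m}^∞ Pⁿ h0 = φ - ∑_{n<m} Pⁿ h0`
      (∀ m : ℕ, lorentzNorm Ω σ
          (fun x => φ x - ∑ n ∈ Finset.range m, (Pop f g)^[n] h0 x) ≤
        ENNReal.ofReal ((2 * α) ^ m / (1 - 2 * α)) * lorentzNorm Ω σ h0) := by
  have hE := quasiconcaveGauge_extInv hY hsm hτ0 hτ hσ_nonneg hσ_left hσ_right
  have hoverlap : ∀ s : Finset (Fin N), L < s.card → volume (⋂ n ∈ s, f n '' Ω) = 0 :=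
    fun s hs => by
      by_contra hne
      refine hs.not_ge (hL.2 ⟨(Nat.zero_le L).trans_lt hs, ?_, s, rfl, pos_iff_ne_zero.2 hne⟩)
      simpa using s.card_le_univ
  exact exists_neumann_series hΩ.measurableSet hmaps hfmeas hgmeas hpreim hE hα
    (absPop_positiveContraction hΩ.measurableSet hmaps hfmeas hgmeas hfdiff hpreim hK hoverlap hJ
      hα0 hg) hh0
end

section
/- Assume hypothesis (H) holds, let m > 1 be an integer, let ψ_m(t) = m·t^m for t ∈ [0,∞), and let h0 ∈ L^{ψ_m,1}(Ω, K). If there exists α ∈ [0, 1/2) such that |g_n(x)| ≤ α · min{|J_{f_n}(x)|/(K·L), 1/N} for all n ∈ {1,…,N} and almost all x ∈ Ω, then the series Σ_{n=0}^{∞} Pⁿh0 converges in L^{ψ_m,1}(Ω, K) to the unique solution φ ∈ L^{ψ_m,1}(Ω, K) of φ = Pφ + h0, and ‖Σ_{k=m}^{∞} P^k h0‖_{L^{ψ_m,1}(Ω,K)} ≤ (2α)^m (1 − 2α)^{-1} ‖h0‖_{L^{ψ_m,1}(Ω,K)}. -/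
open MeasureTheory Filter Topology Set
open scoped ENNReal

/-- The points around which `f` deviates from the linear map `A` by more than `ε` only on a small
proportion of every ball of radius `2⁻ⁿ` with `n ≥ j`. -/
def nearLinearSet {k : ℕ} (f : EuclideanSpace ℝ (Fin k) → EuclideanSpace ℝ (Fin k))
    (A : EuclideanSpace ℝ (Fin k) →L[ℝ] EuclideanSpace ℝ (Fin k)) (ε : ℝ) (j : ℕ) :
    Set (EuclideanSpace ℝ (Fin k)) :=
  {x | ∀ n ≥ j, volume {y | y ∈ Metric.closedBall x ((1 / 2) ^ n) ∧
      ε * ‖y - x‖ < ‖f y - f x - A (y - x)‖} ≤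
    ENNReal.ofReal (1 / 4 * (1 / 2) ^ k) * volume (Metric.closedBall x ((1 / 2) ^ n))}

lemma measurableSet_nearLinearSet {k : ℕ}
    {f : EuclideanSpace ℝ (Fin k) → EuclideanSpace ℝ (Fin k)} (hf : Measurable f)
    (A : EuclideanSpace ℝ (Fin k) →L[ℝ] EuclideanSpace ℝ (Fin k)) (ε : ℝ) (j : ℕ) :
    MeasurableSet (nearLinearSet f A ε j) := by
  have key : nearLinearSet f A ε j = ⋂ n ∈ Set.Ici j, {x | volume {y | y ∈ Metric.closedBall x
      ((1 / 2) ^ n) ∧ ε * ‖y - x‖ < ‖f y - f x - A (y - x)‖} ≤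
      ENNReal.ofReal (1 / 4 * (1 / 2) ^ k) * volume (Metric.closedBall x ((1 / 2) ^ n))} := by
    ext x; simp [nearLinearSet]
  rw [key]
  refine MeasurableSet.biInter (Set.to_countable _) fun n _ => ?_
  have hset : MeasurableSet {p : EuclideanSpace ℝ (Fin k) × EuclideanSpace ℝ (Fin k) |
      dist p.2 p.1 ≤ (1 / 2) ^ n ∧ ε * ‖p.2 - p.1‖ < ‖f p.2 - f p.1 - A (p.2 - p.1)‖} := by
    have h1 : MeasurableSet {p : EuclideanSpace ℝ (Fin k) × EuclideanSpace ℝ (Fin k) |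
        dist p.2 p.1 ≤ (1 / 2) ^ n} := measurableSet_le (by fun_prop) (by fun_prop)
    have h2 : MeasurableSet {p : EuclideanSpace ℝ (Fin k) × EuclideanSpace ℝ (Fin k) |
        ε * ‖p.2 - p.1‖ < ‖f p.2 - f p.1 - A (p.2 - p.1)‖} :=
      measurableSet_lt (by fun_prop) (by fun_prop)
    exact h1.inter h2
  refine measurableSet_le (measurable_measure_prodMk_left (ν := volume) hset) ?_
  simp_rw [Measure.addHaar_closedBall volume _ (by positivity : (0 : ℝ) ≤ (1 / 2) ^ n)]
  exact measurable_const

lemma approximatesLinearOn_of_subset_nearLinearSet {k : ℕ}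
    {f : EuclideanSpace ℝ (Fin k) → EuclideanSpace ℝ (Fin k)}
    {A : EuclideanSpace ℝ (Fin k) →L[ℝ] EuclideanSpace ℝ (Fin k)} {ε : NNReal} {j : ℕ}
    {s : Set (EuclideanSpace ℝ (Fin k))} (hs : s ⊆ nearLinearSet f A ε j)
    (hdiam : ∀ x ∈ s, ∀ y ∈ s, dist x y ≤ (1 / 2) ^ j) :
    ApproximatesLinearOn f A s (4 * ε) := by
  intro x hx y hy
  rcases eq_or_ne x y with rfl | hxy
  · simp
  have hd : 0 < dist x y := dist_pos.2 hxy
  obtain ⟨n, hn1, hn2⟩ := exists_nat_pow_near_of_lt_one hd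
    ((hdiam x hx y hy).trans (pow_le_one₀ (by norm_num) (by norm_num)))
    (by norm_num : (0 : ℝ) < 1 / 2) (by norm_num)
  have hjn : j ≤ n := by
    by_contra! h
    have h1 := pow_le_pow_of_le_one (by norm_num : (0 : ℝ) ≤ 1 / 2) (by norm_num)
      (Nat.succ_le_of_lt h)
    have := hdiam x hx y hy
    simp only [Nat.succ_eq_add_one] at h1
    linarith
  set r : ℝ := (1 / 2) ^ n with hr
  have hr0 : 0 < r := by positivity
  have hrd : r < 2 * dist x y := by rw [pow_succ] at hn1; linarith
  have h1 := hs hx n hjn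
  have h2 := hs hy n hjn
  set Bx := {z | z ∈ Metric.closedBall x r ∧ ε * ‖z - x‖ < ‖f z - f x - A (z - x)‖}
  set By := {z | z ∈ Metric.closedBall y r ∧ ε * ‖z - y‖ < ‖f z - f y - A (z - y)‖}
  have hvol : volume (Bx ∪ By) < volume (Metric.closedBall (midpoint ℝ x y) (r / 2)) := by
    refine (measure_union_le _ _).trans_lt ((add_le_add h1 h2).trans_lt ?_)
    rw [Measure.addHaar_closedBall volume _ hr0.le, Measure.addHaar_closedBall volume _ hr0.le,
      Measure.addHaar_closedBall volume _ (by positivity), ← two_mul, ← mul_assoc, ← mul_assoc]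
    refine ENNReal.mul_lt_mul_left (Metric.measure_ball_pos _ _ one_pos).ne'
      measure_ball_lt_top.ne ?_
    have h2e : (2 : ℝ≥0∞) * ENNReal.ofReal (1 / 4 * (1 / 2) ^ k) =
        ENNReal.ofReal (2 * (1 / 4 * (1 / 2) ^ k)) := by
      rw [ENNReal.ofReal_mul (p := 2) (by norm_num), ENNReal.ofReal_ofNat]
    rw [h2e, ← ENNReal.ofReal_mul (by positivity)]
    refine (ENNReal.ofReal_lt_ofReal_iff (by positivity)).2 ?_
    rw [finrank_euclideanSpace_fin, div_eq_mul_one_div r 2, mul_pow]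
    have : 0 < r ^ k * (1 / 2) ^ k := by positivity
    linarith
  obtain ⟨z, hz, hzn⟩ : ∃ z ∈ Metric.closedBall (midpoint ℝ x y) (r / 2), z ∉ Bx ∪ By := by
    by_contra! h
    exact hvol.not_ge (measure_mono h)
  rw [Metric.mem_closedBall] at hz
  have hzx : dist z x ≤ r := by
    have h3 := dist_triangle z (midpoint ℝ x y) x
    rw [dist_midpoint_left] at h3
    norm_num at h3
    linarith
  have hzy : dist z y ≤ r := by
    have h3 := dist_triangle z (midpoint ℝ x y) y
    rw [dist_midpoint_right] at h3
    norm_num at h3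
    linarith
  simp only [Bx, By, Set.mem_union, Set.mem_ofPred_eq, Metric.mem_closedBall, hzx, hzy, true_and,
    not_or, not_lt] at hzn
  have e : f x - f y - A (x - y) = (f z - f y - A (z - y)) - (f z - f x - A (z - x)) := by
    simp only [map_sub]; abel
  rw [e]
  rw [dist_eq_norm] at hzx hzy hrd
  calc _ ≤ ‖f z - f y - A (z - y)‖ + ‖f z - f x - A (z - x)‖ := norm_sub_le _ _
    _ ≤ ε * r + ε * r := by
        gcongr
        · exact hzn.2.trans (by gcongr)
        · exact hzn.1.trans (by gcongr)
    _ ≤ _ := by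
        push_cast
        have : (ε : ℝ) * r ≤ ε * (2 * ‖x - y‖) := by
          gcongr
        linarith

lemma exists_mem_nearLinearSet {k : ℕ} {Ω : Set (EuclideanSpace ℝ (Fin k))}
    (hΩ : MeasurableSet Ω)
    {f : EuclideanSpace ℝ (Fin k) → EuclideanSpace ℝ (Fin k)} (hf : Measurable f)
    {A L : EuclideanSpace ℝ (Fin k) →L[ℝ] EuclideanSpace ℝ (Fin k)} {ε : ℝ} (hε : 0 < ε)
    (hLA : ‖L - A‖ ≤ ε / 2) {x : EuclideanSpace ℝ (Fin k)} (hL : HasApproxDerivAt Ω f L x) :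
    ∃ j, x ∈ nearLinearSet f A ε j := by
  have hd := hL (ε / 2) (by positivity)
  set G := {y | y ∈ Ω \ {x} ∧ ‖f y - f x - L (y - x)‖ / ‖y - x‖ < ε / 2} with hG
  have hGm : MeasurableSet G := by
    have h1 : MeasurableSet {y | ‖f y - f x - L (y - x)‖ / ‖y - x‖ < ε / 2} :=
      measurableSet_lt (by fun_prop) (by fun_prop)
    exact (hΩ.diff (measurableSet_singleton x)).inter h1
  set c := ENNReal.ofReal (1 / 4 * (1 / 2) ^ k) with hc
  have hc0 : c ≠ 0 := by
    rw [hc]; simp only [ne_eq, ENNReal.ofReal_eq_zero, not_le]; positivity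
  have hlt : (1 : ℝ≥0∞) - c < 1 := ENNReal.sub_lt_self (by simp) (by simp) hc0
  have hev := hd.eventually (lt_mem_nhds hlt)
  have hpow : Tendsto (fun n : ℕ => ((1 : ℝ) / 2) ^ n) atTop (𝓝[>] 0) := by
    refine tendsto_nhdsWithin_iff.2 ⟨tendsto_pow_atTop_nhds_zero_of_lt_one (by norm_num)
      (by norm_num), Eventually.of_forall fun n => ?_⟩
    simp
  obtain ⟨j, hj⟩ := eventually_atTop.1 (hpow.eventually hev)
  refine ⟨j, fun n hn => ?_⟩
  have h1 := hj n hn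
  set r : ℝ := (1 / 2) ^ n with hr
  have hr0 : 0 < r := by positivity
  have hb0 : volume (Metric.closedBall x r) ≠ 0 := (Metric.measure_closedBall_pos _ _ hr0).ne'
  have hbt : volume (Metric.closedBall x r) ≠ ∞ := measure_closedBall_lt_top.ne
  have h2 : (1 - c) * volume (Metric.closedBall x r) ≤ volume (G ∩ Metric.closedBall x r) := by
    rw [ENNReal.lt_div_iff_mul_lt (Or.inl hb0) (Or.inl hbt)] at h1
    exact h1.le
  have h3 : {y | y ∈ Metric.closedBall x r ∧ ε * ‖y - x‖ < ‖f y - f x - A (y - x)‖} ⊆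
      Metric.closedBall x r \ G := by
    rintro y ⟨hy, hy2⟩
    refine ⟨hy, fun hyG => hy2.not_ge ?_⟩
    have hyx : 0 < ‖y - x‖ := norm_pos_iff.2 (sub_ne_zero.2 hyG.1.2)
    have h4 := (div_lt_iff₀ hyx).1 hyG.2
    have e : f y - f x - A (y - x) = (f y - f x - L (y - x)) + (L - A) (y - x) := by simp
    rw [e]
    calc _ ≤ ‖f y - f x - L (y - x)‖ + ‖(L - A) (y - x)‖ := norm_add_le _ _
      _ ≤ ε / 2 * ‖y - x‖ + ε / 2 * ‖y - x‖ := by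
        gcongr
        exact (ContinuousLinearMap.le_opNorm _ _).trans (by gcongr)
      _ = _ := by ring
  have h5 := measure_inter_add_sdiff (μ := volume) (Metric.closedBall x r) hGm
  rw [Set.inter_comm] at h5
  have hc1 : c ≤ 1 := by
    rw [hc, ← ENNReal.ofReal_one]
    apply ENNReal.ofReal_le_ofReal
    have : ((1 : ℝ) / 2) ^ k ≤ 1 := pow_le_one₀ (by norm_num) (by norm_num)
    linarith
  refine (measure_mono h3).trans ?_
  have h6 : (1 - c) * volume (Metric.closedBall x r) + volume (Metric.closedBall x r \ G) ≤
      (1 - c) * volume (Metric.closedBall x r) + c * volume (Metric.closedBall x r) := by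
    rw [← add_mul, tsub_add_cancel_of_le hc1, one_mul]
    exact (add_le_add_left h2 _).trans h5.le
  exact (ENNReal.add_le_add_iff_left (ENNReal.mul_ne_top (by simp) hbt)).1 h6

lemma exists_radius_of_det_ne_zero {k : ℕ}
    (A : EuclideanSpace ℝ (Fin k) →L[ℝ] EuclideanSpace ℝ (Fin k)) (hA : A.det ≠ 0)
    {c : NNReal} (hc : 1 < c) :
    ∃ δ : NNReal, 0 < δ ∧
      (∀ B : EuclideanSpace ℝ (Fin k) →L[ℝ] EuclideanSpace ℝ (Fin k), ‖B - A‖ ≤ δ →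
        ENNReal.ofReal |B.det| ≤ c * ENNReal.ofReal |A.det|) ∧
      ∀ (s : Set (EuclideanSpace ℝ (Fin k)))
        (f : EuclideanSpace ℝ (Fin k) → EuclideanSpace ℝ (Fin k)), ApproximatesLinearOn f A s δ →
        Set.InjOn f s ∧ ENNReal.ofReal |A.det| * volume s ≤ c * volume (f '' s) := by
  have hApos : 0 < |A.det| := abs_pos.2 hA
  have hc0 : 0 < c := one_pos.trans hc
  have hc1 : (1 : ℝ) < c := by exact_mod_cast hc
  set d : NNReal := ⟨|A.det|, abs_nonneg _⟩ with hd
  have hdA : ENNReal.ofReal |A.det| = d := by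
    rw [ENNReal.ofReal]; congr 1; exact Real.toNNReal_of_nonneg _
  have hd0 : 0 < d := by rw [← NNReal.coe_pos]; exact hApos
  have h1 := mul_le_addHaar_image_of_lt_det (volume : Measure (EuclideanSpace ℝ (Fin k))) A
    (m := d / c) (by
      rw [hdA, ENNReal.coe_lt_coe]
      exact div_lt_self hd0 hc)
  have h2 : ∀ᶠ δ : NNReal in 𝓝[>] 0, ∀ B : EuclideanSpace ℝ (Fin k) →L[ℝ]
      EuclideanSpace ℝ (Fin k), ‖B - A‖ ≤ δ → |B.det| ≤ c * |A.det| := by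
    have hcont : Tendsto (fun B : EuclideanSpace ℝ (Fin k) →L[ℝ] EuclideanSpace ℝ (Fin k) =>
        |B.det|) (𝓝 A) (𝓝 |A.det|) :=
      (ContinuousLinearMap.continuous_det.abs).tendsto A
    have hlt : |A.det| < c * |A.det| := by nlinarith
    obtain ⟨η, hη, hB⟩ := Metric.eventually_nhds_iff.1 (hcont.eventually (gt_mem_nhds hlt))
    have : ∀ᶠ δ : NNReal in 𝓝[>] 0, δ < ⟨η, hη.le⟩ := by
      apply nhdsWithin_le_nhds
      exact gt_mem_nhds (by exact_mod_cast hη)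
    filter_upwards [this] with δ hδ B hBA
    have hδ' : (δ : ℝ) < η := hδ
    exact (hB (by rw [dist_eq_norm]; linarith)).le
  set Ae := A.toContinuousLinearEquivOfDetNeZero hA with hAe
  have h3 : ∀ᶠ δ : NNReal in 𝓝[>] 0, Subsingleton (EuclideanSpace ℝ (Fin k)) ∨
      δ < ‖(Ae.symm : EuclideanSpace ℝ (Fin k) →L[ℝ] EuclideanSpace ℝ (Fin k))‖₊⁻¹ := by
    rcases subsingleton_or_nontrivial (EuclideanSpace ℝ (Fin k)) with h | h
    · exact Eventually.of_forall fun _ => Or.inl h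
    · have hpos : 0 < ‖(Ae.symm : EuclideanSpace ℝ (Fin k) →L[ℝ]
          EuclideanSpace ℝ (Fin k))‖₊⁻¹ := inv_pos.2 (Ae.nnnorm_symm_pos)
      apply nhdsWithin_le_nhds
      filter_upwards [gt_mem_nhds hpos] with δ hδ
      exact Or.inr hδ
  obtain ⟨δ, ⟨h1, h2, h3⟩, hδ⟩ := ((h1.and (h2.and h3)).and self_mem_nhdsWithin).exists
  refine ⟨δ, hδ, fun B hB => ?_, fun s f hf => ⟨?_, ?_⟩⟩
  · rw [← ENNReal.ofReal_coe_nnreal, ← ENNReal.ofReal_mul c.coe_nonneg]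
    exact ENNReal.ofReal_le_ofReal (h2 B hB)
  · exact ApproximatesLinearOn.injOn (f' := Ae) (by rwa [hAe,
      ContinuousLinearMap.coe_toContinuousLinearEquivOfDetNeZero]) h3
  · have h := h1 s f hf
    calc ENNReal.ofReal |A.det| * volume s = c * ((d / c : NNReal) * volume s) := by
          rw [hdA, ← mul_assoc, ← ENNReal.coe_mul, mul_div_cancel₀ _ hc0.ne']
      _ ≤ _ := by gcongr

lemma exists_countable_cover_of_det_ne_zero {k : ℕ} (δ : (EuclideanSpace ℝ (Fin k) →L[ℝ]
    EuclideanSpace ℝ (Fin k)) → ℝ) (hδ : ∀ A, A.det ≠ 0 → 0 < δ A) :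
    ∃ A : ℕ → (EuclideanSpace ℝ (Fin k) →L[ℝ] EuclideanSpace ℝ (Fin k)),
      (∀ i, (A i).det ≠ 0) ∧ ∀ B, B.det ≠ 0 → ∃ i, ‖B - A i‖ ≤ δ (A i) := by
  obtain ⟨T, hT, hTU⟩ := TopologicalSpace.isOpen_iUnion_countable
    (fun A : {A : EuclideanSpace ℝ (Fin k) →L[ℝ] EuclideanSpace ℝ (Fin k) // A.det ≠ 0} =>
      Metric.ball A.1 (δ A.1)) (fun _ => Metric.isOpen_ball)
  have hmem : ∀ B : EuclideanSpace ℝ (Fin k) →L[ℝ] EuclideanSpace ℝ (Fin k), B.det ≠ 0 →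
      ∃ A ∈ T, ‖B - A.1‖ ≤ δ A.1 := by
    intro B hB
    have : B ∈ ⋃ A ∈ T, Metric.ball A.1 (δ A.1) := by
      rw [hTU]
      exact Set.mem_iUnion.2 ⟨⟨B, hB⟩, Metric.mem_ball_self (hδ B hB)⟩
    simp only [Set.mem_iUnion, Metric.mem_ball, dist_eq_norm] at this
    obtain ⟨A, hA, h⟩ := this
    exact ⟨A, hA, h.le⟩
  have hne : T.Nonempty := by
    obtain ⟨A, hA, -⟩ := hmem (ContinuousLinearMap.id ℝ _) (by
      simp [ContinuousLinearMap.det])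
    exact ⟨A, hA⟩
  obtain ⟨a, ha⟩ := hT.exists_eq_range hne
  refine ⟨fun i => (a i).1, fun i => (a i).2, fun B hB => ?_⟩
  obtain ⟨A, hA, h⟩ := hmem B hB
  rw [ha] at hA
  obtain ⟨i, rfl⟩ := hA
  exact ⟨i, h⟩

/-- Countable decomposition for approximately differentiable maps: up to a set on which `h`
vanishes, the set `Ω` is covered by countably many disjoint pieces on which `f` is injective and
distorts volume at least by the factor `h / c ^ 2`. -/
lemma exists_disjoint_pieces {k : ℕ} {Ω : Set (EuclideanSpace ℝ (Fin k))}
    (hΩ : MeasurableSet Ω) {f : EuclideanSpace ℝ (Fin k) → EuclideanSpace ℝ (Fin k)}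
    (hf : Measurable f) {h : EuclideanSpace ℝ (Fin k) → ℝ≥0∞} (hh : Measurable h)
    (hhf : ∀ᵐ x ∂(volume.restrict Ω), ∃ L, HasApproxDerivAt Ω f L x ∧
      h x ≤ ENNReal.ofReal |L.det|) {c : NNReal} (hc : 1 < c) :
    ∃ E : ℕ → Set (EuclideanSpace ℝ (Fin k)), (∀ p, MeasurableSet (E p)) ∧ (∀ p, E p ⊆ Ω) ∧
      Pairwise (Function.onFun Disjoint E) ∧ (∀ p, Set.InjOn f (E p)) ∧
      (∀ᵐ x ∂(volume.restrict Ω), h x ≠ 0 → x ∈ ⋃ p, E p) ∧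
      ∀ p, ∀ D, MeasurableSet D →
        ∫⁻ x in E p ∩ D, h x ≤ c ^ 2 * volume (f '' (E p ∩ D)) := by
  choose! δ hδ0 hδdet hδ using fun (A : EuclideanSpace ℝ (Fin k) →L[ℝ]
    EuclideanSpace ℝ (Fin k)) (hA : A.det ≠ 0) => exists_radius_of_det_ne_zero A hA hc
  obtain ⟨A, hA, hAcov⟩ := exists_countable_cover_of_det_ne_zero (fun A => (δ A : ℝ) / 8)
    (fun A hA => by have := hδ0 A hA; positivity)
  set q := TopologicalSpace.denseSeq (EuclideanSpace ℝ (Fin k))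
  let P : ℕ × ℕ × ℕ → Set (EuclideanSpace ℝ (Fin k)) := fun p =>
    Ω ∩ nearLinearSet f (A p.1) (δ (A p.1) / 4 : NNReal) p.2.1 ∩
      Metric.ball (q p.2.2) ((1 / 2) ^ p.2.1 / 2) ∩
      {x | h x ≤ c * ENNReal.ofReal |(A p.1).det|}
  have hPm : ∀ p, MeasurableSet (P p) := fun p =>
    ((hΩ.inter (measurableSet_nearLinearSet hf _ _ _)).inter measurableSet_ball).inter
      (measurableSet_le hh measurable_const)
  have hPa : ∀ p, ∀ s ⊆ P p, ApproximatesLinearOn f (A p.1) s (δ (A p.1)) := by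
    intro p s hs
    have := approximatesLinearOn_of_subset_nearLinearSet (f := f) (A := A p.1)
      (ε := δ (A p.1) / 4) (j := p.2.1) (s := s) (fun x hx => (hs hx).1.1.2) (by
        intro x hx y hy
        have h1 := (hs hx).1.2
        have h2 := (hs hy).1.2
        rw [Metric.mem_ball] at h1 h2
        have := dist_triangle_right x y (q p.2.2)
        linarith)
    rwa [mul_div_cancel₀ _ (by norm_num)] at this
  let e : ℕ ≃ ℕ × ℕ × ℕ := (Denumerable.eqv (ℕ × ℕ × ℕ)).symm
  have hsub : ∀ i, disjointed (fun i => P (e i)) i ⊆ P (e i) := fun i => disjointed_subset _ _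
  refine ⟨disjointed (fun i => P (e i)), fun i => MeasurableSet.disjointed (fun i => hPm _) i,
    fun i => (hsub i).trans fun x hx => hx.1.1.1, disjoint_disjointed _,
    fun i => (hδ _ (hA _) _ f (hPa _ _ (hsub i))).1, ?_, ?_⟩
  · rw [iUnion_disjointed]
    filter_upwards [hhf, ae_restrict_mem hΩ] with x ⟨L, hL, hhL⟩ hx hx0
    have hLdet : L.det ≠ 0 := by
      intro h0
      simp [h0] at hhL
      exact hx0 hhL
    obtain ⟨i, hi⟩ := hAcov L hLdet
    have hpos := hδ0 _ (hA i)
    obtain ⟨j, hj⟩ := exists_mem_nearLinearSet hΩ hf (A := A i) (L := L)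
      (ε := ((δ (A i) / 4 : NNReal) : ℝ)) (by positivity)
      (by push_cast; linarith) hL
    obtain ⟨l, hl⟩ := (TopologicalSpace.denseRange_denseSeq
      (EuclideanSpace ℝ (Fin k))).exists_dist_lt x (by positivity : (0 : ℝ) < (1 / 2) ^ j / 2)
    refine Set.mem_iUnion.2 ⟨e.symm (i, j, l), ?_⟩
    rw [Equiv.apply_symm_apply]
    refine ⟨⟨⟨hx, hj⟩, hl⟩, hhL.trans (hδdet _ (hA i) L (hi.trans ?_))⟩
    have : (0 : ℝ) ≤ δ (A i) := (δ (A i)).coe_nonneg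
    linarith
  · intro i D hD
    have hs : disjointed (fun i => P (e i)) i ∩ D ⊆ P (e i) :=
      Set.inter_subset_left.trans (hsub i)
    calc ∫⁻ x in disjointed (fun i => P (e i)) i ∩ D, h x
        ≤ ∫⁻ x in disjointed (fun i => P (e i)) i ∩ D,
            c * ENNReal.ofReal |(A (e i).1).det| :=
          setLIntegral_mono measurable_const fun x hx => (hs hx).2
      _ = c * (ENNReal.ofReal |(A (e i).1).det| *
            volume (disjointed (fun i => P (e i)) i ∩ D)) := by
          rw [setLIntegral_const, mul_assoc]
      _ ≤ c * (c * volume (f '' (disjointed (fun i => P (e i)) i ∩ D))) := by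
          exact mul_le_mul_right (hδ _ (hA _) _ f (hPa _ _ hs)).2 _
      _ = _ := by rw [pow_two, mul_assoc]

lemma exists_multiplicity_minorant {k : ℕ} {Ω : Set (EuclideanSpace ℝ (Fin k))}
    (hΩ : MeasurableSet Ω) {f : EuclideanSpace ℝ (Fin k) → EuclideanSpace ℝ (Fin k)}
    (hf : Measurable f) {h : EuclideanSpace ℝ (Fin k) → ℝ≥0∞} (hh : Measurable h)
    (hhf : ∀ᵐ x ∂(volume.restrict Ω), ∃ L, HasApproxDerivAt Ω f L x ∧
      h x ≤ ENNReal.ofReal |L.det|) {c : NNReal} (hc : 1 < c) :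
    ∃ w : EuclideanSpace ℝ (Fin k) → ℝ≥0∞, Measurable w ∧
      (∀ y, w y ≤ ((f ⁻¹' {y} ∩ Ω).encard : ℝ≥0∞)) ∧
      ∀ D, MeasurableSet D →
        ∫⁻ x in Ω ∩ f ⁻¹' D, h x ≤ c ^ 2 * ∫⁻ y in D, w y := by
  obtain ⟨E, hEm, hEΩ, hEd, hEi, hEc, hE⟩ := exists_disjoint_pieces hΩ hf hh hhf hc
  have him : ∀ p, MeasurableSet (f '' E p) := fun p => (hEm p).image_of_measurable_injOn hf (hEi p)
  refine ⟨fun y => ∑' p, (f '' E p).indicator 1 y,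
    Measurable.tsum fun p => measurable_one.indicator (him p), fun y => ?_,
    fun D hD => ?_⟩
  · have h1 : ∑' p, (f '' E p).indicator (1 : EuclideanSpace ℝ (Fin k) → ℝ≥0∞) y =
        ∑' p, ({p | y ∈ f '' E p} : Set ℕ).indicator 1 p := by
      refine tsum_congr fun p => ?_
      by_cases hy : y ∈ f '' E p <;> simp [Set.indicator, hy]
    beta_reduce
    rw [h1, ← tsum_subtype]
    simp only [Pi.one_apply]
    rw [ENNReal.tsum_set_one]
    have h2 : ∀ p : ℕ, ∃ x, y ∈ f '' E p → x ∈ E p ∧ f x = y := by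
      intro p
      by_cases hy : y ∈ f '' E p
      · obtain ⟨x, hx⟩ := hy; exact ⟨x, fun _ => hx⟩
      · exact ⟨0, fun h => absurd h hy⟩
    choose x hx using h2
    have h3 : ({p | y ∈ f '' E p} : Set ℕ).encard ≤ (f ⁻¹' {y} ∩ Ω).encard := by
      refine Set.encard_le_encard_of_injOn (f := x) (fun p hp => ?_) (fun p hp p' hp' hpp => ?_)
      · exact ⟨(hx p hp).2, hEΩ p (hx p hp).1⟩
      · by_contra hne
        exact Set.disjoint_left.1 (hEd hne) (hx p hp).1 (hpp ▸ (hx p' hp').1)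
    exact_mod_cast h3
  · have hfD : MeasurableSet (f ⁻¹' D) := hf hD
    have h1 : ∫⁻ x in Ω ∩ f ⁻¹' D, h x ≤ ∫⁻ x in ⋃ p, (E p ∩ f ⁻¹' D), h x := by
      rw [← lintegral_indicator (hΩ.inter hfD),
        ← lintegral_indicator (MeasurableSet.iUnion fun p => (hEm p).inter hfD)]
      refine lintegral_mono_ae ?_
      filter_upwards [(ae_restrict_iff' hΩ).1 hEc] with x hx
      by_cases hxm : x ∈ Ω ∩ f ⁻¹' D
      · rw [Set.indicator_of_mem hxm]
        by_cases h0 : h x = 0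
        · simp [h0]
        · rw [Set.indicator_of_mem]
          rw [← Set.iUnion_inter]
          exact ⟨hx hxm.1 h0, hxm.2⟩
      · rw [Set.indicator_of_notMem hxm]; exact zero_le
    calc _ ≤ _ := h1
      _ ≤ ∑' p, ∫⁻ x in E p ∩ f ⁻¹' D, h x := lintegral_iUnion_le _ _
      _ ≤ ∑' p, c ^ 2 * volume (f '' E p ∩ D) := by
          gcongr with p
          refine (hE p _ hfD).trans ?_
          rw [Set.image_inter_preimage]
      _ = c ^ 2 * ∑' p, ∫⁻ y in D, (f '' E p).indicator 1 y := by
          rw [ENNReal.tsum_mul_left]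
          congr 1
          refine tsum_congr fun p => ?_
          rw [lintegral_indicator_one (him p), Measure.restrict_apply (him p)]
      _ = _ := by
          rw [lintegral_tsum fun p => (measurable_one.indicator (him p)).aemeasurable]

lemma exists_map_withDensity_le {k : ℕ} {Ω : Set (EuclideanSpace ℝ (Fin k))}
    (hΩ : MeasurableSet Ω) {f : EuclideanSpace ℝ (Fin k) → EuclideanSpace ℝ (Fin k)}
    (hf : Measurable f) {h : EuclideanSpace ℝ (Fin k) → ℝ≥0∞} (hh : Measurable h)
    (hhf : ∀ᵐ x ∂(volume.restrict Ω), ∃ L, HasApproxDerivAt Ω f L x ∧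
      h x ≤ ENNReal.ofReal |L.det|) :
    ∃ w : EuclideanSpace ℝ (Fin k) → ℝ≥0∞, Measurable w ∧
      (∀ y, w y ≤ ((f ⁻¹' {y} ∩ Ω).encard : ℝ≥0∞)) ∧
      ∀ u : EuclideanSpace ℝ (Fin k) → ℝ≥0∞, Measurable u →
        ∫⁻ x in Ω, h x * u (f x) ≤ ∫⁻ y, w y * u y := by
  obtain ⟨c, -, hc, hclim⟩ := exists_seq_strictAnti_tendsto (1 : NNReal)
  choose w hwm hwc hw using fun n => exists_multiplicity_minorant hΩ hf hh hhf (hc n)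
  refine ⟨fun y => ⨆ n, w n y, Measurable.iSup hwm, fun y => iSup_le fun n => hwc n y,
    fun u hu => ?_⟩
  have hm : Measurable fun y => ⨆ n, w n y := Measurable.iSup hwm
  have hle : Measure.map f ((volume.restrict Ω).withDensity h) ≤
      volume.withDensity (fun y => ⨆ n, w n y) := by
    refine Measure.le_iff.2 fun D hD => ?_
    rw [Measure.map_apply hf hD, withDensity_apply _ (hf hD), withDensity_apply _ hD,
      Measure.restrict_restrict (hf hD), Set.inter_comm]
    have h1 : ∀ n, ∫⁻ x in Ω ∩ f ⁻¹' D, h x ≤ (c n : ℝ≥0∞) ^ 2 * ∫⁻ y in D, ⨆ n, w n y :=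
      fun n => (hw n D hD).trans (by
        gcongr with y
        exact le_iSup (fun n => w n y) n)
    have h2 : Tendsto (fun n => (c n : ℝ≥0∞) ^ 2 * ∫⁻ y in D, ⨆ n, w n y) atTop
        (𝓝 ((1 : ℝ≥0∞) ^ 2 * ∫⁻ y in D, ⨆ n, w n y)) := by
      refine ENNReal.Tendsto.mul_const ?_ (Or.inl (by simp))
      exact ENNReal.Tendsto.pow (ENNReal.tendsto_coe.2 hclim)
    simpa using ge_of_tendsto' h2 h1
  have h3 := lintegral_mono' hle (le_refl u)
  rwa [lintegral_map hu hf,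
    lintegral_withDensity_eq_lintegral_mul _ hh (g := fun x => u (f x)) (hu.comp hf),
    lintegral_withDensity_eq_lintegral_mul _ hm hu] at h3

lemma sum_encard_preimage_le {X : Type*} {N K L : ℕ} {Ω : Set X} (f : Fin N → X → X) (y : X)
    (hK : ∀ n, (f n ⁻¹' {y} ∩ Ω).encard ≤ (K : ℕ∞))
    (hL : ∀ s : Finset (Fin N), L < s.card → y ∉ ⋂ n ∈ s, f n '' Ω) :
    ∑ n, (f n ⁻¹' {y} ∩ Ω).encard ≤ ((K * L : ℕ) : ℕ∞) := by
  classical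
  set s : Finset (Fin N) := Finset.univ.filter fun n => y ∈ f n '' Ω with hs
  have hcard : s.card ≤ L := by
    by_contra! h
    exact hL s h (Set.mem_iInter₂.2 fun n hn => (Finset.mem_filter.1 hn).2)
  have h0 : ∀ n ∉ s, (f n ⁻¹' {y} ∩ Ω).encard = 0 := by
    intro n hn
    rw [Set.encard_eq_zero, Set.eq_empty_iff_forall_notMem]
    rintro x ⟨hx1, hx2⟩
    exact hn (by simpa [hs] using ⟨x, hx2, hx1⟩)
  rw [← Finset.sum_subset (Finset.subset_univ s) fun n _ hn => h0 n hn]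
  calc _ ≤ ∑ n ∈ s, (K : ℕ∞) := Finset.sum_le_sum fun n _ => hK n
    _ = ((s.card * K : ℕ) : ℕ∞) := by simp
    _ ≤ _ := by
      rw [Nat.cast_le, mul_comm]
      exact Nat.mul_le_mul_left _ hcard

lemma sum_lintegral_mul_comp_le {k N : ℕ} {𝕜 : Type*} [RCLike 𝕜]
    {Ω : Set (EuclideanSpace ℝ (Fin k))} (hΩ : IsOpen Ω)
    {f : Fin N → EuclideanSpace ℝ (Fin k) → EuclideanSpace ℝ (Fin k)}
    (hmaps : ∀ n, Set.MapsTo (f n) Ω Ω)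
    {g : Fin N → EuclideanSpace ℝ (Fin k) → 𝕜}
    (hfmeas : ∀ n, Measurable (f n))
    (hfdiff : ∀ n, ∀ᵐ x ∂(volume.restrict Ω), ∃ L, HasApproxDerivAt Ω (f n) L x)
    {K : ℕ}
    (hK : ∀ n, volume {x | x ∈ Ω ∧ (K : ℕ∞) < (f n ⁻¹' {x} ∩ Ω).encard} = 0)
    (hgmeas : ∀ n, Measurable (g n))
    {L : ℕ} (hL0 : 0 < L)
    (hL : ∀ s : Finset (Fin N), L < s.card → volume (⋂ n ∈ s, f n '' Ω) = 0)
    {J : Fin N → EuclideanSpace ℝ (Fin k) → ℝ}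
    (hJ : ∀ n x, ∀ L', HasApproxDerivAt Ω (f n) L' x → J n x = L'.det)
    {α : ℝ} (hα0 : 0 ≤ α)
    (hg : ∀ n, ∀ᵐ x ∂(volume.restrict Ω), ‖g n x‖ ≤ α * (|J n x| / ((K : ℝ) * (L : ℝ))))
    {u : EuclideanSpace ℝ (Fin k) → ℝ≥0∞} (hu : Measurable u) :
    ∫⁻ x in Ω, ∑ n, ‖g n x‖ₑ * u (f n x) ≤ ENNReal.ofReal α * ∫⁻ x in Ω, u x := by
  have hmeas : ∀ n, Measurable fun x => ‖g n x‖ₑ * u (f n x) :=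
    fun n => (hgmeas n).enorm.mul (hu.comp (hfmeas n))
  have hsum : ∫⁻ x in Ω, ∑ n, ‖g n x‖ₑ * u (f n x) =
      ∑ n, ∫⁻ x in Ω, ‖g n x‖ₑ * u (f n x) :=
    lintegral_finsetSum _ fun n _ => hmeas n
  rw [hsum]
  by_cases hαK : α = 0 ∨ K = 0
  · have h0 : ∀ n, ∫⁻ x in Ω, ‖g n x‖ₑ * u (f n x) = 0 := by
      intro n
      rw [lintegral_eq_zero_iff (hmeas n)]
      filter_upwards [hg n] with x hx
      have : ‖g n x‖ ≤ 0 := by rcases hαK with h | h <;> simpa [h] using hx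
      have : g n x = 0 := by simpa using this
      simp [this]
    simp [h0]
  push Not at hαK
  obtain ⟨hα, hK0⟩ := hαK
  have hαpos : 0 < α := lt_of_le_of_ne hα0 (Ne.symm hα)
  have hKL : 0 < (K : ℝ) * L := by
    have : 0 < K := Nat.pos_of_ne_zero hK0
    positivity
  set C : ℝ := (K : ℝ) * L / α with hC
  have hCpos : 0 < C := by positivity
  have hex : ∀ n, ∀ᵐ x ∂(volume.restrict Ω), ∃ L', HasApproxDerivAt Ω (f n) L' x ∧
      ENNReal.ofReal C * ‖g n x‖ₑ ≤ ENNReal.ofReal |L'.det| := by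
    intro n
    filter_upwards [hg n, hfdiff n] with x hx ⟨L', hL'⟩
    refine ⟨L', hL', ?_⟩
    rw [hJ n x L' hL'] at hx
    rw [← ofReal_norm, ← ENNReal.ofReal_mul hCpos.le]
    apply ENNReal.ofReal_le_ofReal
    calc C * ‖g n x‖ ≤ C * (α * (|L'.det| / ((K : ℝ) * L))) := by gcongr
      _ = |L'.det| := by rw [hC]; field_simp
  choose w hwm hwc hw using fun n => exists_map_withDensity_le hΩ.measurableSet (hfmeas n)
    ((hgmeas n).enorm.const_mul (ENNReal.ofReal C)) (hex n)
  have hbound : ∀ᵐ y : EuclideanSpace ℝ (Fin k), ∑ n, w n y * u y ≤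
      Ω.indicator (fun y => ENNReal.ofReal ((K : ℝ) * L) * u y) y := by
    have h1 : ∀ᵐ y : EuclideanSpace ℝ (Fin k), ∀ n,
        ¬ (y ∈ Ω ∧ (K : ℕ∞) < (f n ⁻¹' {y} ∩ Ω).encard) :=
      ae_all_iff.2 fun n => by
        rw [ae_iff]; simpa using hK n
    have h2 : ∀ᵐ y : EuclideanSpace ℝ (Fin k), ∀ s : Finset (Fin N), L < s.card →
        y ∉ ⋂ n ∈ s, f n '' Ω := by
      refine ae_all_iff.2 fun s => ?_
      by_cases hs : L < s.card
      · filter_upwards [measure_eq_zero_iff_ae_notMem.1 (hL s hs)] with y hy _ using hy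
      · exact Eventually.of_forall fun y h => absurd h hs
    filter_upwards [h1, h2] with y hy1 hy2
    by_cases hyΩ : y ∈ Ω
    · rw [Set.indicator_of_mem hyΩ, ← Finset.sum_mul]
      gcongr
      have h3 := sum_encard_preimage_le f y (fun n => not_lt.1 fun h => hy1 n ⟨hyΩ, h⟩) hy2
      calc ∑ n, w n y ≤ ∑ n, ((f n ⁻¹' {y} ∩ Ω).encard : ℝ≥0∞) :=
            Finset.sum_le_sum fun n _ => hwc n y
        _ = ((∑ n, (f n ⁻¹' {y} ∩ Ω).encard : ℕ∞) : ℝ≥0∞) :=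
            (map_sum ENat.toENNRealRingHom _ _).symm
        _ ≤ (((K * L : ℕ) : ℕ∞) : ℝ≥0∞) := by exact_mod_cast h3
        _ = _ := by
          rw [← Nat.cast_mul, ENNReal.ofReal_natCast]; simp
    · rw [Set.indicator_of_notMem hyΩ]
      refine (Finset.sum_eq_zero fun n _ => ?_).le
      have h3 : f n ⁻¹' {y} ∩ Ω = ∅ := by
        rw [Set.eq_empty_iff_forall_notMem]
        rintro x ⟨hx1, hx2⟩
        exact hyΩ (hx1 ▸ hmaps n hx2)
      have h4 := hwc n y
      rw [h3] at h4
      simp only [Set.encard_empty, ENat.toENNReal_zero, nonpos_iff_eq_zero] at h4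
      simp [h4]
  have hmain : ENNReal.ofReal C * ∑ n, ∫⁻ x in Ω, ‖g n x‖ₑ * u (f n x) ≤
      ENNReal.ofReal ((K : ℝ) * L) * ∫⁻ x in Ω, u x := by
    rw [Finset.mul_sum]
    calc _ = ∑ n, ∫⁻ x in Ω, ENNReal.ofReal C * ‖g n x‖ₑ * u (f n x) := by
          refine Finset.sum_congr rfl fun n _ => ?_
          rw [← lintegral_const_mul _ (hmeas n)]
          simp_rw [mul_assoc]
      _ ≤ ∑ n, ∫⁻ y, w n y * u y := Finset.sum_le_sum fun n _ => hw n u hu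
      _ = ∫⁻ y, ∑ n, w n y * u y :=
          (lintegral_finsetSum _ fun n _ => (hwm n).mul hu).symm
      _ ≤ _ := lintegral_mono_ae hbound
      _ = _ := by
          rw [lintegral_indicator hΩ.measurableSet, lintegral_const_mul _ hu]
  have hKLα : ENNReal.ofReal ((K : ℝ) * L) = ENNReal.ofReal C * ENNReal.ofReal α := by
    rw [← ENNReal.ofReal_mul hCpos.le, hC]
    congr 1
    field_simp
  rw [hKLα, mul_assoc] at hmain
  exact (ENNReal.mul_le_mul_iff_right (by simpa using hCpos) (by simp)).1 hmain

/-- The truncated integral `∫₀^∞ min (μ {u > s}) t ds`, which is the `K`-functional of `u` for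
the couple `(L¹, L^∞)`. -/
noncomputable def truncDistrib {X : Type*} [MeasurableSpace X] (μ : Measure X) (u : X → ℝ≥0∞)
    (t : ℝ≥0∞) : ℝ≥0∞ :=
  ∫⁻ s in Set.Ioi (0 : ℝ), min (μ {x | ENNReal.ofReal s < u x}) t

/-- The Lorentz norm of an `[0, ∞]`-valued function on an arbitrary measure space. -/
noncomputable def lorentzENorm {X : Type*} [MeasurableSpace X] (μ : Measure X) (σ : ℝ → ℝ)
    (u : X → ℝ≥0∞) : ℝ≥0∞ :=
  ∫⁻ s in Set.Ioi (0 : ℝ), extInv σ (μ {x | ENNReal.ofReal s < u x})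

section Lorentz

variable {X : Type*} [MeasurableSpace X] {μ : Measure X}

lemma antitone_distrib (μ : Measure X) (u : X → ℝ≥0∞) :
    Antitone fun s : ℝ => μ {x | ENNReal.ofReal s < u x} := fun _ _ hst =>
  measure_mono fun _ hx => (ENNReal.ofReal_le_ofReal hst).trans_lt hx

lemma lintegral_Ioi_distrib [SFinite μ] {u : X → ℝ≥0∞} (hu : Measurable u) {r : ℝ} (hr : 0 ≤ r) :
    ∫⁻ s in Set.Ioi r, μ {x | ENNReal.ofReal s < u x} = ∫⁻ x, (u x - ENNReal.ofReal r) ∂μ := by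
  have hm : MeasurableSet {p : ℝ × X | ENNReal.ofReal p.1 < u p.2} :=
    measurableSet_lt (by fun_prop) (by fun_prop)
  have h1 : ∀ s : ℝ, μ {x | ENNReal.ofReal s < u x} =
      ∫⁻ x, {p : ℝ × X | ENNReal.ofReal p.1 < u p.2}.indicator 1 (s, x) ∂μ := by
    intro s
    have hs : MeasurableSet {x | ENNReal.ofReal s < u x} :=
      measurableSet_lt measurable_const hu
    rw [← lintegral_indicator_one hs]
    rfl
  simp_rw [h1]
  rw [lintegral_lintegral_swap (by
    exact (measurable_one.indicator hm).aemeasurable)]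
  refine lintegral_congr fun x => ?_
  have hs : MeasurableSet {s : ℝ | ENNReal.ofReal s < u x} :=
    measurableSet_lt (by fun_prop) measurable_const
  have h2 : ∫⁻ s in Set.Ioi r, {p : ℝ × X | ENNReal.ofReal p.1 < u p.2}.indicator 1 (s, x) =
      ∫⁻ s in Set.Ioi r, {s : ℝ | ENNReal.ofReal s < u x}.indicator 1 s := rfl
  rw [h2, lintegral_indicator_one hs, Measure.restrict_apply hs]
  rcases eq_or_ne (u x) ∞ with hx | hx
  · simp [hx]
  · have h3 : {s : ℝ | ENNReal.ofReal s < u x} ∩ Set.Ioi r = Set.Ioo r (u x).toReal := by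
      ext s
      simp only [Set.mem_inter_iff, Set.mem_ofPred_eq, Set.mem_Ioi, Set.mem_Ioo]
      constructor
      · rintro ⟨h, hrs⟩
        exact ⟨hrs, (ENNReal.ofReal_lt_iff_lt_toReal (hr.trans hrs.le) hx).1 h⟩
      · rintro ⟨hrs, h⟩
        exact ⟨(ENNReal.ofReal_lt_iff_lt_toReal (hr.trans hrs.le) hx).2 h, hrs⟩
    rw [h3, Real.volume_Ioo, ENNReal.ofReal_sub _ hr, ENNReal.ofReal_toReal hx]

lemma truncDistrib_le [SFinite μ] {u : X → ℝ≥0∞} (hu : Measurable u) {t : ℝ≥0∞} (ht : t ≠ 0)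
    (r : ℝ≥0∞) : truncDistrib μ u t ≤ t * r + ∫⁻ x, (u x - r) ∂μ := by
  rcases eq_or_ne r ∞ with rfl | hr
  · simp [ht]
  have hr0 : 0 ≤ r.toReal := ENNReal.toReal_nonneg
  have h1 := lintegral_Ioi_distrib (μ := μ) hu hr0
  rw [ENNReal.ofReal_toReal hr] at h1
  rw [truncDistrib, ← Set.Ioc_union_Ioi_eq_Ioi hr0, ← h1]
  refine (lintegral_union_le _ _ _).trans (add_le_add ?_ ?_)
  · calc _ ≤ ∫⁻ s in Set.Ioc 0 r.toReal, t := lintegral_mono fun s => min_le_right _ _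
      _ = t * r := by
        rw [setLIntegral_const, Real.volume_Ioc, sub_zero, ENNReal.ofReal_toReal hr]
  · exact lintegral_mono fun s => min_le_left _ _

lemma exists_le_truncDistrib [SFinite μ] {u : X → ℝ≥0∞} (hu : Measurable u) {t : ℝ≥0∞}
    (ht : t ≠ 0) : ∃ r : ℝ≥0∞, t * r + ∫⁻ x, (u x - r) ∂μ ≤ truncDistrib μ u t := by
  set S : Set ℝ := {s | 0 ≤ s ∧ μ {x | ENNReal.ofReal s < u x} ≤ t} with hS
  rcases S.eq_empty_or_nonempty with hempty | hne
  · refine ⟨0, ?_⟩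
    have h1 : ∞ ≤ truncDistrib μ u t := by
      calc ∞ = ∫⁻ s in Set.Ioi (0 : ℝ), t := by
            rw [setLIntegral_const, Real.volume_Ioi, ENNReal.mul_top ht]
        _ ≤ _ := setLIntegral_mono' measurableSet_Ioi fun s hs => by
            refine le_min ?_ le_rfl
            by_contra! h
            have : s ∈ S := ⟨le_of_lt hs, h.le⟩
            simp [hempty] at this
    exact le_top.trans h1
  · have hr0 : 0 ≤ sInf S := le_csInf hne fun s hs => hs.1
    have hbdd : BddBelow S := ⟨0, fun s hs => hs.1⟩
    refine ⟨ENNReal.ofReal (sInf S), ?_⟩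
    rw [← lintegral_Ioi_distrib hu hr0]
    calc _ = (∫⁻ s in Set.Ioo 0 (sInf S), t) +
            ∫⁻ s in Set.Ioi (sInf S), μ {x | ENNReal.ofReal s < u x} := by
          rw [setLIntegral_const, Real.volume_Ioo, sub_zero]
      _ ≤ (∫⁻ s in Set.Ioo 0 (sInf S), min (μ {x | ENNReal.ofReal s < u x}) t) +
            ∫⁻ s in Set.Ioi (sInf S), min (μ {x | ENNReal.ofReal s < u x}) t := by
          refine add_le_add (setLIntegral_mono' measurableSet_Ioo fun s hs => ?_)
            (setLIntegral_mono' measurableSet_Ioi fun s hs => ?_)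
          · refine le_min ?_ le_rfl
            by_contra! h
            exact (notMem_of_lt_csInf hs.2 hbdd) ⟨hs.1.le, h.le⟩
          · refine le_min le_rfl ?_
            obtain ⟨s', hs', hlt⟩ := (csInf_lt_iff hbdd hne).1 hs
            exact (antitone_distrib μ u hlt.le).trans hs'.2
      _ = ∫⁻ s in Set.Ioo 0 (sInf S) ∪ Set.Ioi (sInf S),
            min (μ {x | ENNReal.ofReal s < u x}) t := by
          refine (lintegral_union measurableSet_Ioi ?_).symm
          exact Set.disjoint_left.2 fun s hs hs' => lt_asymm hs.2 hs'
      _ ≤ _ := lintegral_mono_set (Set.union_subset (fun s hs => hs.1)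
          fun s hs => hr0.trans_lt hs)

lemma monotone_truncDistrib (μ : Measure X) (u : X → ℝ≥0∞) : Monotone (truncDistrib μ u) :=
  fun _ _ h => lintegral_mono fun _ => min_le_min le_rfl h

lemma truncDistrib_tsum_le [SFinite μ] {u : ℕ → X → ℝ≥0∞} (hu : ∀ n, Measurable (u n))
    {t : ℝ≥0∞} (ht : t ≠ 0) :
    truncDistrib μ (fun x => ∑' n, u n x) t ≤ ∑' n, truncDistrib μ (u n) t := by
  choose r hr using fun n => exists_le_truncDistrib (μ := μ) (hu n) ht
  refine (truncDistrib_le (Measurable.tsum hu) ht (∑' n, r n)).trans ?_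
  refine le_trans ?_ (ENNReal.tsum_le_tsum hr)
  rw [ENNReal.tsum_add, ENNReal.tsum_mul_left,
    ← lintegral_tsum fun n => ((hu n).sub_const _).aemeasurable]
  gcongr with x
  rw [tsub_le_iff_right, ← ENNReal.tsum_add]
  exact ENNReal.tsum_le_tsum fun n => le_tsub_add

/-- A representation of the extended inverse `extInv σ` as a mixture of the functions
`a ↦ min a t`. -/
structure IsMixture (σ : ℝ → ℝ) (W : ℝ → ℝ≥0∞) : Prop where
  measurable : Measurable W
  ne_zero : ∀ t, 0 < t → W t ≠ 0
  eq_lintegral : ∀ a, extInv σ a = ∫⁻ t in Set.Ioi (0 : ℝ), W t * min a (ENNReal.ofReal t)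

variable {σ : ℝ → ℝ} {W : ℝ → ℝ≥0∞}

lemma IsMixture.measurable_mul_truncDistrib (hW : IsMixture σ W) (μ : Measure X)
    (u : X → ℝ≥0∞) : Measurable fun t => W t * truncDistrib μ u (ENNReal.ofReal t) :=
  hW.measurable.mul ((monotone_truncDistrib μ u).measurable.comp ENNReal.measurable_ofReal)

lemma lorentzENorm_eq_lintegral [SFinite μ] (hW : IsMixture σ W) (u : X → ℝ≥0∞) :
    lorentzENorm μ σ u =
      ∫⁻ t in Set.Ioi (0 : ℝ), W t * truncDistrib μ u (ENNReal.ofReal t) := by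
  have hd : Measurable fun s : ℝ => μ {x | ENNReal.ofReal s < u x} :=
    (antitone_distrib μ u).measurable
  have hWm := hW.measurable
  simp_rw [lorentzENorm, hW.eq_lintegral]
  rw [lintegral_lintegral_swap (by
    refine Measurable.aemeasurable ?_
    exact (hWm.comp measurable_snd).mul ((hd.comp measurable_fst).min
      (ENNReal.measurable_ofReal.comp measurable_snd)))]
  refine lintegral_congr fun t => ?_
  rw [truncDistrib, lintegral_const_mul _ (hd.min measurable_const)]

lemma lorentzENorm_mono_ae (hW : IsMixture σ W) {u v : X → ℝ≥0∞} (h : u ≤ᵐ[μ] v) :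
    lorentzENorm μ σ u ≤ lorentzENorm μ σ v := by
  refine lintegral_mono fun s => ?_
  simp_rw [hW.eq_lintegral]
  gcongr ∫⁻ t in _, W t * min ?_ _ with t
  refine measure_mono_ae ?_
  filter_upwards [h] with x hx hs
  exact lt_of_lt_of_le hs hx

lemma lorentzENorm_tsum_le [SFinite μ] (hW : IsMixture σ W) {u : ℕ → X → ℝ≥0∞}
    (hu : ∀ n, Measurable (u n)) :
    lorentzENorm μ σ (fun x => ∑' n, u n x) ≤ ∑' n, lorentzENorm μ σ (u n) := by
  simp_rw [lorentzENorm_eq_lintegral hW]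
  rw [← lintegral_tsum fun n => (hW.measurable_mul_truncDistrib μ (u n)).aemeasurable]
  refine setLIntegral_mono' measurableSet_Ioi fun t ht => ?_
  rw [ENNReal.tsum_mul_left]
  gcongr
  exact truncDistrib_tsum_le hu (by simpa using ht)

lemma lorentzENorm_le_mul [SFinite μ] (hW : IsMixture σ W) {u v : X → ℝ≥0∞}
    (hu : Measurable u) (hv : Measurable v) {c : ℝ≥0∞}
    (h : ∀ r, ∫⁻ x, (v x - c * r) ∂μ ≤ c * ∫⁻ x, (u x - r) ∂μ) :
    lorentzENorm μ σ v ≤ c * lorentzENorm μ σ u := by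
  simp_rw [lorentzENorm_eq_lintegral hW]
  rw [← lintegral_const_mul _ (hW.measurable_mul_truncDistrib μ u)]
  refine setLIntegral_mono' measurableSet_Ioi fun t ht => ?_
  have ht0 : ENNReal.ofReal t ≠ 0 := by simpa using ht
  rw [mul_left_comm]
  gcongr
  obtain ⟨r, hr⟩ := exists_le_truncDistrib (μ := μ) hu ht0
  calc _ ≤ ENNReal.ofReal t * (c * r) + ∫⁻ x, (v x - c * r) ∂μ := truncDistrib_le hv ht0 _
    _ ≤ ENNReal.ofReal t * (c * r) + c * ∫⁻ x, (u x - r) ∂μ := by gcongr; exact h r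
    _ = c * (ENNReal.ofReal t * r + ∫⁻ x, (u x - r) ∂μ) := by ring
    _ ≤ _ := by gcongr

lemma exists_lintegral_sub_lt_top [SFinite μ] (hW : IsMixture σ W) {u : X → ℝ≥0∞}
    (hu : Measurable u) (h : lorentzENorm μ σ u < ∞) :
    ∃ r : ℝ≥0∞, r < ∞ ∧ ∫⁻ x, (u x - r) ∂μ < ∞ := by
  rw [lorentzENorm_eq_lintegral hW] at h
  have hae := ae_lt_top (hW.measurable_mul_truncDistrib μ u) h.ne
  have : NeBot (ae (volume.restrict (Set.Ioi (0 : ℝ)))) := by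
    rw [ae_neBot]; simp
  obtain ⟨t, ht, ht0⟩ := (hae.and (ae_restrict_mem measurableSet_Ioi)).exists
  have ht0' : ENNReal.ofReal t ≠ 0 := by simpa using ht0
  have h1 : truncDistrib μ u (ENNReal.ofReal t) < ∞ :=
    ENNReal.lt_top_of_mul_ne_top_right ht.ne (hW.ne_zero t ht0)
  obtain ⟨r, hr⟩ := exists_le_truncDistrib (μ := μ) hu ht0'
  have h2 := ENNReal.add_lt_top.1 (hr.trans_lt h1)
  exact ⟨r, ENNReal.lt_top_of_mul_ne_top_right h2.1.ne ht0', h2.2⟩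

lemma ae_lt_top_of_lorentzENorm_lt_top [SFinite μ] (hW : IsMixture σ W) {u : X → ℝ≥0∞}
    (hu : Measurable u) (h : lorentzENorm μ σ u < ∞) : ∀ᵐ x ∂μ, u x < ∞ := by
  obtain ⟨r, hr, hur⟩ := exists_lintegral_sub_lt_top hW hu h
  filter_upwards [ae_lt_top (hu.sub_const r) hur.ne] with x hx
  by_contra! hx'
  rw [top_le_iff.1 hx', ENNReal.top_sub hr.ne] at hx
  exact lt_irrefl _ hx

lemma ae_eq_zero_of_lorentzENorm_eq_zero [SFinite μ] (hW : IsMixture σ W) {u : X → ℝ≥0∞}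
    (hu : Measurable u) (h : lorentzENorm μ σ u = 0) : u =ᵐ[μ] 0 := by
  rw [lorentzENorm_eq_lintegral hW, lintegral_eq_zero_iff
    (hW.measurable_mul_truncDistrib μ u)] at h
  have : NeBot (ae (volume.restrict (Set.Ioi (0 : ℝ)))) := by
    rw [ae_neBot]; simp
  obtain ⟨t, ht, ht0⟩ := (h.and (ae_restrict_mem measurableSet_Ioi)).exists
  have ht0' : ENNReal.ofReal t ≠ 0 := by simpa using ht0
  have h1 : truncDistrib μ u (ENNReal.ofReal t) = 0 :=
    (mul_eq_zero.1 ht).resolve_left (hW.ne_zero t ht0)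
  obtain ⟨r, hr⟩ := exists_le_truncDistrib (μ := μ) hu ht0'
  rw [h1, nonpos_iff_eq_zero, add_eq_zero] at hr
  obtain rfl : r = 0 := (mul_eq_zero.1 hr.1).resolve_left ht0'
  simpa using (lintegral_eq_zero_iff hu).1 (by simpa using hr.2)

end Lorentz

lemma isMixture_rpow {σ : ℝ → ℝ} {b p : ℝ} (hb : 0 < b) (hp0 : 0 < p) (hp1 : p < 1)
    (hσ : ∀ a, 0 ≤ a → σ a = (b * a) ^ p) :
    IsMixture σ fun t => ENNReal.ofReal (b ^ p * p * (1 - p) * t ^ (p - 2)) := by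
  set C := b ^ p * p * (1 - p) with hC
  have hq : 0 < 1 - p := by linarith
  have hCpos : 0 < C := by positivity
  have hfin : ∀ a : ℝ, 0 ≤ a → ENNReal.ofReal (σ a) = ∫⁻ t in Set.Ioi (0 : ℝ),
      ENNReal.ofReal (C * t ^ (p - 2)) * min (ENNReal.ofReal a) (ENNReal.ofReal t) := by
    intro a ha
    rcases ha.eq_or_lt with rfl | ha
    · simp [hσ 0 le_rfl, Real.zero_rpow hp0.ne']
    rw [← Set.Ioc_union_Ioi_eq_Ioi ha.le, lintegral_union measurableSet_Ioi
      (Set.disjoint_left.2 fun t ht ht' => not_lt.2 ht.2 ht')]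
    have h1 : ∫⁻ t in Set.Ioc 0 a,
        ENNReal.ofReal (C * t ^ (p - 2)) * min (ENNReal.ofReal a) (ENNReal.ofReal t) =
        ENNReal.ofReal (C * (a ^ p / p)) := by
      have hint : IntegrableOn (fun t : ℝ => C * t ^ (p - 1)) (Set.Ioc 0 a) := by
        have := (intervalIntegral.intervalIntegrable_rpow' (a := 0) (b := a)
          (by linarith : -1 < p - 1)).const_mul C
        rwa [intervalIntegrable_iff_integrableOn_Ioc_of_le ha.le] at this
      calc _ = ∫⁻ t in Set.Ioc 0 a, ENNReal.ofReal (C * t ^ (p - 1)) := by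
            refine setLIntegral_congr_fun measurableSet_Ioc fun t ht => ?_
            rw [min_eq_right (ENNReal.ofReal_le_ofReal ht.2), ← ENNReal.ofReal_mul (by
              have := Real.rpow_nonneg ht.1.le (p - 2); positivity), mul_assoc,
              ← Real.rpow_add_one ht.1.ne']
            congr 3; ring
        _ = ENNReal.ofReal (∫ t in Set.Ioc 0 a, C * t ^ (p - 1)) := by
            rw [ofReal_integral_eq_lintegral_ofReal hint]
            filter_upwards [ae_restrict_mem measurableSet_Ioc] with t ht
            have := Real.rpow_nonneg ht.1.le (p - 1)
            positivity
        _ = _ := by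
            rw [← intervalIntegral.integral_of_le ha.le, intervalIntegral.integral_const_mul,
              integral_rpow (Or.inl (by linarith))]
            simp [Real.zero_rpow hp0.ne']
    have h2 : ∫⁻ t in Set.Ioi a,
        ENNReal.ofReal (C * t ^ (p - 2)) * min (ENNReal.ofReal a) (ENNReal.ofReal t) =
        ENNReal.ofReal (C * (a ^ p / (1 - p))) := by
      have hint : IntegrableOn (fun t : ℝ => C * t ^ (p - 2)) (Set.Ioi a) :=
        (integrableOn_Ioi_rpow_of_lt (by linarith) ha).const_mul C
      calc _ = ∫⁻ t in Set.Ioi a, ENNReal.ofReal (C * t ^ (p - 2)) * ENNReal.ofReal a := by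
            refine setLIntegral_congr_fun measurableSet_Ioi fun t ht => ?_
            rw [min_eq_left (ENNReal.ofReal_le_ofReal (le_of_lt ht))]
        _ = ENNReal.ofReal (∫ t in Set.Ioi a, C * t ^ (p - 2)) * ENNReal.ofReal a := by
            rw [lintegral_mul_const _ (by fun_prop), ofReal_integral_eq_lintegral_ofReal hint]
            filter_upwards [ae_restrict_mem measurableSet_Ioi] with t ht
            have := Real.rpow_nonneg (ha.trans ht).le (p - 2)
            positivity
        _ = _ := by
            have hI : 0 ≤ ∫ t in Set.Ioi a, C * t ^ (p - 2) :=
              setIntegral_nonneg measurableSet_Ioi fun t ht => by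
                have := Real.rpow_nonneg (ha.trans ht).le (p - 2)
                positivity
            rw [← ENNReal.ofReal_mul hI, integral_const_mul,
              integral_Ioi_rpow_of_lt (by linarith) ha]
            congr 1
            have e : a ^ p = a ^ (p - 2 + 1) * a := by
              rw [← Real.rpow_add_one ha.ne']; congr 1; ring
            have e2 : p - 2 + 1 = -(1 - p) := by ring
            rw [e, e2]
            field_simp
    rw [h1, h2, ← ENNReal.ofReal_add (by positivity) (by positivity), hσ a ha.le,
      Real.mul_rpow hb.le ha.le, hC]
    congr 1
    field_simp
    ring
  refine ⟨by fun_prop, fun t ht => ?_, fun a => ?_⟩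
  · simp only [ne_eq, ENNReal.ofReal_eq_zero, not_le]
    positivity
  rcases eq_or_ne a ∞ with rfl | ha
  · simp only [extInv, if_true]
    symm
    refine ENNReal.eq_top_of_forall_nnreal_le fun y => ?_
    have h1 : σ ((y : ℝ) ^ p⁻¹ / b) = y := by
      rw [hσ _ (by positivity), mul_div_cancel₀ _ hb.ne',
        Real.rpow_inv_rpow y.coe_nonneg hp0.ne']
    have h2 := hfin ((y : ℝ) ^ p⁻¹ / b) (by positivity)
    rw [h1, ENNReal.ofReal_coe_nnreal] at h2
    rw [h2]
    gcongr
    exact le_top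
  · have h := hfin a.toReal ENNReal.toReal_nonneg
    rw [ENNReal.ofReal_toReal ha] at h
    rw [extInv, if_neg ha, h]

lemma lorentzNorm_eq_lorentzENorm {k : ℕ} {𝕜 : Type*} [RCLike 𝕜]
    {Ω : Set (EuclideanSpace ℝ (Fin k))} (hΩ : MeasurableSet Ω) (σ : ℝ → ℝ)
    (f : EuclideanSpace ℝ (Fin k) → 𝕜) :
    lorentzNorm Ω σ f = lorentzENorm (volume.restrict Ω) σ fun x => ‖f x‖ₑ := by
  refine setLIntegral_congr_fun measurableSet_Ioi fun s hs => ?_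
  beta_reduce
  congr 1
  rw [distribFn, Measure.restrict_apply' hΩ]
  congr 1
  ext x
  simp only [Set.mem_ofPred_eq, Set.mem_inter_iff, ← ofReal_norm]
  rw [ENNReal.ofReal_lt_ofReal_iff_of_nonneg (le_of_lt hs), and_comm]

lemma locallyIntegrableOn_of_lorentzENorm_lt_top {k : ℕ} {𝕜 : Type*} [RCLike 𝕜]
    {Ω : Set (EuclideanSpace ℝ (Fin k))} {σ : ℝ → ℝ} {W : ℝ → ℝ≥0∞}
    (hW : IsMixture σ W) {f : EuclideanSpace ℝ (Fin k) → 𝕜} (hf : Measurable f)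
    (h : lorentzENorm (volume.restrict Ω) σ (fun x => ‖f x‖ₑ) < ∞) :
    LocallyIntegrableOn f Ω volume := by
  obtain ⟨r, hr, hfr⟩ := exists_lintegral_sub_lt_top hW hf.enorm h
  intro x _
  refine ⟨Ω ∩ Metric.closedBall x 1, inter_mem_nhdsWithin _
    (Metric.closedBall_mem_nhds x one_pos), hf.aestronglyMeasurable, ?_⟩
  calc ∫⁻ y in Ω ∩ Metric.closedBall x 1, ‖f y‖ₑ
      ≤ ∫⁻ y in Ω ∩ Metric.closedBall x 1, ((‖f y‖ₑ - r) + r) :=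
        lintegral_mono fun y => le_tsub_add
    _ = (∫⁻ y in Ω ∩ Metric.closedBall x 1, (‖f y‖ₑ - r)) +
          r * volume (Ω ∩ Metric.closedBall x 1) := by
        rw [lintegral_add_right _ measurable_const, setLIntegral_const]
    _ < ∞ := by
        refine ENNReal.add_lt_top.2 ⟨(lintegral_mono_set Set.inter_subset_left).trans_lt hfr,
          ENNReal.mul_lt_top hr ?_⟩
        exact (measure_mono Set.inter_subset_right).trans_lt measure_closedBall_lt_top

lemma lorentzENorm_sum_mul_comp_le {X ι : Type*} [MeasurableSpace X] [Fintype ι] {μ : Measure X}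
    [SFinite μ] {σ : ℝ → ℝ} {W : ℝ → ℝ≥0∞} (hW : IsMixture σ W) {f : ι → X → X}
    (hf : ∀ n, Measurable (f n)) {g : ι → X → ℝ≥0∞} (hg : ∀ n, Measurable (g n)) {c : ℝ≥0∞}
    (hsup : ∀ᵐ x ∂μ, ∑ n, g n x ≤ c)
    (hint : ∀ u : X → ℝ≥0∞, Measurable u → ∫⁻ x, ∑ n, g n x * u (f n x) ∂μ ≤ c * ∫⁻ x, u x ∂μ)
    {u : X → ℝ≥0∞} (hu : Measurable u) :
    lorentzENorm μ σ (fun x => ∑ n, g n x * u (f n x)) ≤ c * lorentzENorm μ σ u := by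
  refine lorentzENorm_le_mul hW hu (Finset.measurable_sum _ fun n _ =>
    (hg n).mul (hu.comp (hf n))) fun r => ?_
  refine le_trans (lintegral_mono_ae ?_) (hint (fun x => u x - r) (hu.sub_const r))
  filter_upwards [hsup] with x hx
  rw [tsub_le_iff_right]
  calc ∑ n, g n x * u (f n x) ≤ ∑ n, g n x * ((u (f n x) - r) + r) := by
        gcongr
        exact le_tsub_add
    _ = ∑ n, g n x * (u (f n x) - r) + (∑ n, g n x) * r := by
        simp_rw [mul_add, Finset.sum_add_distrib, Finset.sum_mul]
    _ ≤ _ := by gcongr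

/-- Under hypothesis (H), for an integer `m > 1` and the Young function
`ψ_m(t) = m t^m`, if `h0 ∈ L^{ψ_m,1}(Ω,𝕜)` and
`|g_n(x)| ≤ α · min{|J_{f_n}(x)|/(K·L), 1/N}` a.e. for some `α ∈ [0, 1/2)`, then the
series `∑ Pⁿ h0` converges in `L^{ψ_m,1}(Ω,𝕜)` to the unique solution `φ` of
`φ = P φ + h0` in `L^{ψ_m,1}(Ω,𝕜)`, and
`‖∑_{n=m}^∞ Pⁿ h0‖ ≤ (2α)^m (1-2α)⁻¹ ‖h0‖`. -/
theorem stmt17 {k N : ℕ} {𝕜 : Type*} [RCLike 𝕜]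
    (Ω : Set (EuclideanSpace ℝ (Fin k))) (hΩ : IsOpen Ω)
    (f : Fin N → EuclideanSpace ℝ (Fin k) → EuclideanSpace ℝ (Fin k))
    (hmaps : ∀ n, Set.MapsTo (f n) Ω Ω)
    (g : Fin N → EuclideanSpace ℝ (Fin k) → 𝕜) (h0 : EuclideanSpace ℝ (Fin k) → 𝕜)
    -- hypothesis (H):
    (hfmeas : ∀ n, Measurable (f n))
    (hfdiff : ∀ n, ∀ᵐ x ∂(volume.restrict Ω), ∃ L, HasApproxDerivAt Ω (f n) L x)
    (hLuzinN : ∀ n, ∀ S ⊆ Ω, volume S = 0 → volume (f n '' S) = 0)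
    (hpreim : ∀ n, ∀ M : Set (EuclideanSpace ℝ (Fin k)),
      volume M = 0 → volume (f n ⁻¹' M) = 0)
    (K : ℕ)
    (hK : ∀ n, volume {x | x ∈ Ω ∧ (K : ℕ∞) < (f n ⁻¹' {x} ∩ Ω).encard} = 0)
    (hgmeas : ∀ n, Measurable (g n)) (hh0meas : Measurable h0)
    (L : ℕ)
    (hL : IsGreatest {l : ℕ | 1 ≤ l ∧ l ≤ N ∧ ∃ s : Finset (Fin N), s.card = l ∧
      0 < volume (⋂ n ∈ s, f n '' Ω)} L)
    -- the (approximate) Jacobians of the maps `f n`: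
    (J : Fin N → EuclideanSpace ℝ (Fin k) → ℝ)
    (hJ : ∀ n x, ∀ L', HasApproxDerivAt Ω (f n) L' x → J n x = L'.det)
    (hJ0 : ∀ n x, ¬ (∃ L', HasApproxDerivAt Ω (f n) L' x) → J n x = 0)
    -- the Young function `ψ_m t = m * t ^ m` for an integer `m > 1`, with `τ` and
    -- `σ = τ⁻¹`:
    (m : ℕ) (hm : 1 < m)
    (ψ : ℝ → ℝ) (hψ : ∀ t : ℝ, ψ t = m * t ^ m)
    (τ : ℝ → ℝ) (hτ0 : τ 0 = 0) (hτ : ∀ t : ℝ, 0 < t → τ t = 1 / ψ (1 / t))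
    (σ : ℝ → ℝ) (hσ_nonneg : ∀ t : ℝ, 0 ≤ t → 0 ≤ σ t)
    (hσ_left : ∀ t : ℝ, 0 ≤ t → σ (τ t) = t)
    (hσ_right : ∀ t : ℝ, 0 ≤ t → τ (σ t) = t)
    -- `h0 ∈ L^{ψ,1}(Ω,𝕜)`:
    (hh0 : MemLorentz Ω σ h0)
    -- the contraction-type bound on the coefficients:
    (α : ℝ) (hα0 : 0 ≤ α) (hα : α < 1 / 2)
    (hg : ∀ n, ∀ᵐ x ∂(volume.restrict Ω),
      ‖g n x‖ ≤ α * min (|J n x| / ((K : ℝ) * (L : ℝ))) (1 / (N : ℝ))) :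
    ∃ φ : EuclideanSpace ℝ (Fin k) → 𝕜, MemLorentz Ω σ φ ∧
      -- the series `∑_{n=0}^∞ Pⁿ h0` converges in `L^{ψ,1}(Ω,𝕜)` to `φ`
      Tendsto (fun M => lorentzNorm Ω σ
          (fun x => (∑ n ∈ Finset.range M, (Pop f g)^[n] h0 x) - φ x))
        atTop (𝓝 0) ∧
      -- `φ` solves `φ = P φ + h0`
      (∀ᵐ x ∂(volume.restrict Ω), φ x = (∑ n : Fin N, g n x * φ (f n x)) + h0 x) ∧
      -- `φ` is the unique solution in `L^{ψ,1}(Ω,𝕜)`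
      (∀ φ' : EuclideanSpace ℝ (Fin k) → 𝕜, MemLorentz Ω σ φ' →
        (∀ᵐ x ∂(volume.restrict Ω), φ' x = (∑ n : Fin N, g n x * φ' (f n x)) + h0 x) →
        φ' =ᵐ[volume.restrict Ω] φ) ∧
      -- the norm estimate for the tail `∑_{n=m}^∞ Pⁿ h0 = φ - ∑_{n<m} Pⁿ h0`
      lorentzNorm Ω σ
          (fun x => φ x - ∑ n ∈ Finset.range m, (Pop f g)^[n] h0 x) ≤
        ENNReal.ofReal ((2 * α) ^ m / (1 - 2 * α)) * lorentzNorm Ω σ h0 := by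
  have hΩm := hΩ.measurableSet
  have hm1 : (1 : ℝ) < m := by exact_mod_cast hm
  have hm0 : (0 : ℝ) < m := by linarith
  have hσ : ∀ a, 0 ≤ a → σ a = ((m : ℝ) * a) ^ ((m : ℝ)⁻¹) := by
    intro a ha
    set t := ((m : ℝ) * a) ^ ((m : ℝ)⁻¹) with ht
    have ht0 : 0 ≤ t := by positivity
    have htm : t ^ m = m * a := Real.rpow_inv_natCast_pow (by positivity) (by omega)
    have hτt : τ t = a := by
      rcases ht0.eq_or_lt with h | h
      · rw [← h, hτ0]
        rw [← h, zero_pow (by omega)] at htm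
        exact ((mul_eq_zero.1 htm.symm).resolve_left hm0.ne').symm
      · rw [hτ t h, hψ, div_pow, one_pow, htm]
        have : t ^ m ≠ 0 := by positivity
        rw [htm] at this
        have ha0 : a ≠ 0 := right_ne_zero_of_mul this
        field_simp
    rw [← hσ_left t ht0, hτt]
  obtain ⟨W, hW⟩ : ∃ W, IsMixture σ W :=
    ⟨_, isMixture_rpow hm0 (inv_pos.2 hm0) (inv_lt_one_of_one_lt₀ hm1) hσ⟩
  set μ : Measure (EuclideanSpace ℝ (Fin k)) := volume.restrict Ω with hμ
  obtain ⟨⟨hL1, hLN, -⟩, hLub⟩ := hL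
  have hN : (0 : ℝ) < N := by
    have : 0 < N := by omega
    exact_mod_cast this
  set c := ENNReal.ofReal α with hc
  have hc1 : c < 1 := by rw [hc, ENNReal.ofReal_lt_one]; linarith
  have hcoef : ∀ᵐ x ∂μ, ∑ n, ‖g n x‖ₑ ≤ c := by
    filter_upwards [ae_all_iff.2 hg] with x hx
    calc ∑ n, ‖g n x‖ₑ ≤ ∑ n : Fin N, ENNReal.ofReal (α * (1 / N)) := by
          refine Finset.sum_le_sum fun n _ => ?_
          rw [← ofReal_norm]
          exact ENNReal.ofReal_le_ofReal ((hx n).trans (by gcongr; exact min_le_right _ _))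
      _ = c := by
          rw [Finset.sum_const, Finset.card_univ, Fintype.card_fin, nsmul_eq_mul,
            ← ENNReal.ofReal_natCast, ← ENNReal.ofReal_mul hN.le, hc]
          congr 1
          field_simp
  have hT : ∀ u : EuclideanSpace ℝ (Fin k) → ℝ≥0∞, Measurable u →
      lorentzENorm μ σ (fun x => ∑ n, ‖g n x‖ₑ * u (f n x)) ≤ c * lorentzENorm μ σ u := by
    intro u hu
    refine lorentzENorm_sum_mul_comp_le hW hfmeas (fun n => (hgmeas n).enorm) hcoef
      (fun v hv => ?_) hu
    refine sum_lintegral_mul_comp_le hΩ hmaps hfmeas hfdiff hK hgmeas (by omega : 0 < L) ?_ hJ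
      hα0 (fun n => ?_) hv
    · intro s hs
      by_contra h0
      have := hLub ⟨by omega, by simpa using s.card_le_univ, s, rfl, pos_iff_ne_zero.2 h0⟩
      omega
    · filter_upwards [hg n] with x hx
      exact hx.trans (by gcongr; exact min_le_left _ _)
  have hPle : ∀ (v : EuclideanSpace ℝ (Fin k) → 𝕜) x,
      ‖Pop f g v x‖ₑ ≤ ∑ n, ‖g n x‖ₑ * ‖v (f n x)‖ₑ := by
    intro v x
    refine (enorm_sum_le _ _).trans (Finset.sum_le_sum fun n _ => ?_)
    rw [enorm_mul]
  set a : ℕ → EuclideanSpace ℝ (Fin k) → 𝕜 := fun j => (Pop f g)^[j] h0 with ha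
  have hasucc : ∀ j, a (j + 1) = Pop f g (a j) := fun j => Function.iterate_succ_apply' _ _ _
  have hameas : ∀ j, Measurable (a j) := by
    intro j
    induction j with
    | zero => exact hh0meas
    | succ j ih =>
      rw [hasucc]
      exact Finset.measurable_sum _ fun n _ => (hgmeas n).mul (ih.comp (hfmeas n))
  set H := lorentzENorm μ σ fun x => ‖h0 x‖ₑ with hH
  have hHnorm : lorentzNorm Ω σ h0 = H := lorentzNorm_eq_lorentzENorm hΩm σ h0
  have hHfin : H < ∞ := hHnorm ▸ hh0.2.2
  have hanorm : ∀ j, lorentzENorm μ σ (fun x => ‖a j x‖ₑ) ≤ c ^ j * H := by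
    intro j
    induction j with
    | zero => simp [ha, hH]
    | succ j ih =>
      calc _ ≤ lorentzENorm μ σ (fun x => ∑ n, ‖g n x‖ₑ * ‖a j (f n x)‖ₑ) :=
            lorentzENorm_mono_ae hW (Eventually.of_forall fun x => by
              rw [hasucc]; exact hPle _ _)
        _ ≤ c * lorentzENorm μ σ (fun x => ‖a j x‖ₑ) := hT _ (hameas j).enorm
        _ ≤ c * (c ^ j * H) := by gcongr
        _ = _ := by ring
  have htail : ∀ M, lorentzENorm μ σ (fun x => ∑' j, ‖a (j + M) x‖ₑ) ≤
      c ^ M * (1 - c)⁻¹ * H := by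
    intro M
    calc _ ≤ ∑' j, lorentzENorm μ σ (fun x => ‖a (j + M) x‖ₑ) :=
          lorentzENorm_tsum_le hW fun j => (hameas _).enorm
      _ ≤ ∑' j, c ^ (j + M) * H := ENNReal.tsum_le_tsum fun j => hanorm _
      _ = _ := by
          simp_rw [pow_add]
          rw [ENNReal.tsum_mul_right, ENNReal.tsum_mul_right, ENNReal.tsum_geometric]
          ring
  have hinv : (1 - c)⁻¹ < ∞ := ENNReal.inv_lt_top.2 (tsub_pos_of_lt hc1)
  set U : EuclideanSpace ℝ (Fin k) → ℝ≥0∞ := fun x => ∑' j, ‖a j x‖ₑ with hU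
  have hUmeas : Measurable U := Measurable.tsum fun j => (hameas j).enorm
  have hUnorm : lorentzENorm μ σ U < ∞ := by
    have h := htail 0
    simp only [add_zero, pow_zero, one_mul] at h
    exact h.trans_lt (ENNReal.mul_lt_top hinv hHfin)
  have hUae : ∀ᵐ x ∂μ, U x < ∞ := ae_lt_top_of_lorentzENorm_lt_top hW hUmeas hUnorm
  have hUset : MeasurableSet {x | U x < ∞} := measurableSet_lt hUmeas measurable_const
  have hsum : ∀ x, U x < ∞ → Summable fun j => a j x := by
    intro x hx
    refine Summable.of_norm ?_
    have := ENNReal.summable_toReal hx.ne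
    simpa using this
  set φ : EuclideanSpace ℝ (Fin k) → 𝕜 := {x | U x < ∞}.indicator fun x => ∑' j, a j x with hφ
  have hφeq : ∀ x, U x < ∞ → φ x = ∑' j, a j x := fun x hx => by
    simp only [hφ]; exact Set.indicator_of_mem (s := {x | U x < ∞}) hx _
  have hφmeas : Measurable φ := by
    refine measurable_of_tendsto_metrizable (f := fun M => {x | U x < ∞}.indicator fun x =>
      ∑ j ∈ Finset.range M, a j x) (fun M => (Finset.measurable_sum _ fun j _ =>
      hameas j).indicator hUset) (tendsto_pi_nhds.2 fun x => ?_)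
    by_cases hx : U x < ∞
    · simp only [hφ, Set.indicator, Set.mem_ofPred_eq, hx, if_true]
      exact (hsum x hx).hasSum.tendsto_sum_nat
    · simp [hφ, Set.indicator, hx]
  have hφtail : ∀ M, ∀ᵐ x ∂μ, ‖φ x - ∑ j ∈ Finset.range M, a j x‖ₑ ≤ ∑' j, ‖a (j + M) x‖ₑ := by
    intro M
    filter_upwards [hUae] with x hx
    rw [hφeq x hx, ← (hsum x hx).sum_add_tsum_nat_add M, add_sub_cancel_left]
    exact enorm_tsum_le_tsum_enorm
  have hφnorm : ∀ M, lorentzENorm μ σ (fun x => ‖φ x - ∑ j ∈ Finset.range M, a j x‖ₑ) ≤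
      c ^ M * (1 - c)⁻¹ * H := fun M => (lorentzENorm_mono_ae hW (hφtail M)).trans (htail M)
  have hφfin : lorentzENorm μ σ (fun x => ‖φ x‖ₑ) < ∞ := by
    have h := hφnorm 0
    simp only [Finset.range_zero, Finset.sum_empty, sub_zero, pow_zero, one_mul] at h
    exact h.trans_lt (ENNReal.mul_lt_top hinv hHfin)
  have hφsol : ∀ᵐ x ∂μ, φ x = (∑ n : Fin N, g n x * φ (f n x)) + h0 x := by
    have h1 : volume (Ω ∩ {x | ¬ U x < ∞}) = 0 := by
      have := ae_iff.1 hUae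
      rwa [hμ, Measure.restrict_apply' hΩm, Set.inter_comm] at this
    have h2 : ∀ᵐ x ∂μ, ∀ n, f n x ∉ Ω ∩ {x | ¬ U x < ∞} :=
      ae_restrict_of_ae (ae_all_iff.2 fun n => measure_eq_zero_iff_ae_notMem.1 (hpreim n _ h1))
    filter_upwards [hUae, h2, ae_restrict_mem hΩm] with x hx hfx hxΩ
    have h3 : ∀ n, U (f n x) < ∞ := fun n => by
      by_contra h
      exact hfx n ⟨hmaps n hxΩ, h⟩
    have h4 : HasSum (fun j => a (j + 1) x) (∑ n, g n x * φ (f n x)) := by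
      simp_rw [hasucc]
      refine hasSum_sum fun n _ => HasSum.mul_left _ ?_
      rw [hφeq _ (h3 n)]
      exact (hsum _ (h3 n)).hasSum
    rw [hφeq x hx, (hsum x hx).tsum_eq_zero_add, h4.tsum_eq, add_comm]
    rfl
  refine ⟨φ, ⟨hφmeas, locallyIntegrableOn_of_lorentzENorm_lt_top hW hφmeas hφfin, ?_⟩, ?_, hφsol,
    ?_, ?_⟩
  · rwa [lorentzNorm_eq_lorentzENorm hΩm]
  · have h1 : Tendsto (fun M => c ^ M * (1 - c)⁻¹ * H) atTop (𝓝 0) := by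
      have h := ENNReal.Tendsto.mul_const (b := (1 - c)⁻¹ * H)
        (ENNReal.tendsto_pow_atTop_nhds_zero_of_lt_one hc1)
        (Or.inr (ENNReal.mul_lt_top hinv hHfin).ne)
      simpa [mul_assoc] using h
    refine tendsto_of_tendsto_of_tendsto_of_le_of_le tendsto_const_nhds h1
      (fun _ => zero_le) fun M => ?_
    beta_reduce
    rw [lorentzNorm_eq_lorentzENorm hΩm]
    simp_rw [enorm_sub_rev _ (φ _)]
    exact hφnorm M
  · rintro φ' ⟨hφ'meas, -, hφ'fin⟩ hφ'sol
    rw [lorentzNorm_eq_lorentzENorm hΩm] at hφ'fin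
    set w : EuclideanSpace ℝ (Fin k) → ℝ≥0∞ := fun x => ‖φ' x - φ x‖ₑ with hw
    have hwmeas : Measurable w := (hφ'meas.sub hφmeas).enorm
    have hwle : lorentzENorm μ σ w ≤ c * lorentzENorm μ σ w := by
      refine (lorentzENorm_mono_ae hW ?_).trans (hT w hwmeas)
      filter_upwards [hφsol, hφ'sol] with x hx hx'
      refine le_trans (le_of_eq ?_) (hPle (fun x => φ' x - φ x) x)
      simp only [hw]
      rw [hx, hx']
      simp only [Pop, mul_sub, Finset.sum_sub_distrib, add_sub_add_right_eq_sub]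
    have hwfin : lorentzENorm μ σ w < ∞ := by
      have h1 := lorentzENorm_tsum_le (μ := μ) hW
        (u := fun i x => if i = 0 then ‖φ' x‖ₑ else if i = 1 then ‖φ x‖ₑ else 0) (fun i => by
          rcases i with _ | _ | i
          · simpa using hφ'meas.enorm
          · simpa using hφmeas.enorm
          · simp)
      have h2 : ∀ v : ℕ → ℝ≥0∞, (∀ i, v (i + 2) = 0) → ∑' i, v i = v 0 + v 1 := by
        intro v hv
        rw [tsum_eq_sum (s := Finset.range 2) (fun i hi => by
          obtain ⟨j, rfl⟩ := Nat.exists_eq_add_of_le' (not_lt.1 (Finset.mem_range.not.1 hi))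
          exact hv j)]
        simp [Finset.sum_range_succ]
      have h0' : lorentzENorm μ σ (fun _ => (0 : ℝ≥0∞)) = 0 := by
        simp [lorentzENorm, extInv, hσ, Real.zero_rpow (inv_pos.2 hm0).ne']
      rw [h2 _ (fun i => by simpa using h0')] at h1
      refine lt_of_le_of_lt ((lorentzENorm_mono_ae hW (Eventually.of_forall fun x => ?_)).trans h1)
        (ENNReal.add_lt_top.2 ⟨by simpa using hφ'fin, by simpa using hφfin⟩)
      rw [h2 _ (fun i => by simp)]
      simpa using enorm_sub_le
    have hw0 : lorentzENorm μ σ w = 0 := by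
      by_contra hne
      have h := ENNReal.mul_lt_mul_left hne hwfin.ne hc1
      rw [one_mul] at h
      exact not_lt.2 hwle h
    filter_upwards [ae_eq_zero_of_lorentzENorm_eq_zero hW hwmeas hw0] with x hx
    simpa [hw, sub_eq_zero] using hx
  · rw [lorentzNorm_eq_lorentzENorm hΩm, hHnorm]
    refine (hφnorm m).trans ?_
    gcongr
    rw [div_eq_mul_inv, ENNReal.ofReal_mul (by positivity), ENNReal.ofReal_pow (by positivity),
      ENNReal.ofReal_inv_of_pos (by linarith)]
    gcongr
    · exact ENNReal.ofReal_le_ofReal (by linarith)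
    · rw [hc, ← ENNReal.ofReal_one, ← ENNReal.ofReal_sub _ hα0]
      exact ENNReal.ofReal_le_ofReal (by linarith)
end
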